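/- Let Q ∈ ℂ[z₁, …, zₙ] be a quasihomogeneous polynomial of type (w₁, …, wₙ) and quasihomogeneous degree d with an isolated singularity at 0 ∈ ℂⁿ, and let f = Q + F′ be a semiquasihomogeneous germ of holomorphic function at 0, i.e., every monomial in the Taylor series of F′ has weighted degree strictly greater than d. Then there exist a germ of biholomorphism φ : (ℂⁿ,0) → (ℂⁿ,0), finitely many monomials e₁, …, e_s ∈ ℂ[z₁, …, zₙ] of weighted degree strictly greater than d whose residue classes in the local algebra A_Q are ℂ-linearly independent (they are elements of a monomial basis of A_Q), and constants c₁, …, c_s ∈ ℂ, such that f ∘ φ⁻¹ = Q + Σ_{j=1}^s c_j e_j. -/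

import Mathlib

open Filter Topology

/-- Wirtinger derivative ∂/∂z_j of a (complex-valued) function at `p`:
`(1/2)(∂F/∂x_j − i ∂F/∂y_j)`. -/
noncomputable def wirtZ {n : ℕ} (F : (Fin n → ℂ) → ℂ) (j : Fin n) (p : Fin n → ℂ) : ℂ :=
  (fderiv ℝ F p (Pi.single j 1) - Complex.I * fderiv ℝ F p (Pi.single j Complex.I)) / 2

/-- Wirtinger derivative ∂/∂z̄_j of a (complex-valued) function at `p`:
`(1/2)(∂F/∂x_j + i ∂F/∂y_j)`. -/
noncomputable def wirtZbar {n : ℕ} (F : (Fin n → ℂ) → ℂ) (j : Fin n) (p : Fin n → ℂ) : ℂ :=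
  (fderiv ℝ F p (Pi.single j 1) + Complex.I * fderiv ℝ F p (Pi.single j Complex.I)) / 2

/-- The germ `M = {F = 0}` at `0` is Levi-flat: for every point `p` of `M* = M \ Sing(M)`
near `0` and every `v` with `Σ_j F_{z_j}(p) v_j = 0` one has
`Σ_{i,j} F_{z_i z̄_j}(p) v_i conj(v_j) = 0`. -/
def LeviFlatGerm {n : ℕ} (F : (Fin n → ℂ) → ℝ) : Prop :=
  ∀ᶠ p in 𝓝 (0 : Fin n → ℂ), F p = 0 → fderiv ℝ F p ≠ 0 →
    ∀ v : Fin n → ℂ,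
      (∑ j, wirtZ (fun z => ((F z : ℝ) : ℂ)) j p * v j) = 0 →
      (∑ i, ∑ j, wirtZbar (wirtZ (fun z => ((F z : ℝ) : ℂ)) i) j p * v i * (starRingEnd ℂ) (v j)) = 0

/-- `F` is irreducible in the ring of germs at `0` of real-valued real-analytic functions:
in any factorization `F = g·h` one of the factors is a unit (i.e. does not vanish at `0`). -/
def IrreducibleRGerm {n : ℕ} (F : (Fin n → ℂ) → ℝ) : Prop :=
  ∀ g h : (Fin n → ℂ) → ℝ, AnalyticAt ℝ g 0 → AnalyticAt ℝ h 0 →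
    (∀ᶠ z in 𝓝 (0 : Fin n → ℂ), F z = g z * h z) → g 0 ≠ 0 ∨ h 0 ≠ 0

/-- `φ` is a germ of biholomorphism `(ℂⁿ,0) → (ℂⁿ,0)` with local inverse `ι`. -/
def IsGermBiholo {n : ℕ} (φ ι : (Fin n → ℂ) → (Fin n → ℂ)) : Prop :=
  AnalyticAt ℂ φ 0 ∧ AnalyticAt ℂ ι 0 ∧ φ 0 = 0 ∧ ι 0 = 0 ∧
  (∀ᶠ z in 𝓝 (0 : Fin n → ℂ), ι (φ z) = z) ∧ (∀ᶠ z in 𝓝 (0 : Fin n → ℂ), φ (ι z) = z)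

/-- `φ` is volume-preserving (isochore): the determinant of its complex Jacobian is
identically `1` near `0`. -/
def IsVolumePreserving {n : ℕ} (φ : (Fin n → ℂ) → (Fin n → ℂ)) : Prop :=
  ∀ᶠ z in 𝓝 (0 : Fin n → ℂ), LinearMap.det ((fderiv ℂ φ z).toLinearMap) = 1

/-- `ψ` is a germ of automorphism of `(ℂ,0)`. -/
def IsGermAuto (ψ : ℂ → ℂ) : Prop :=
  AnalyticAt ℂ ψ 0 ∧ ψ 0 = 0 ∧ deriv ψ 0 ≠ 0

/-!
Filter the germs at `0` by weighted order, `zᵢ` having weight `wᵢ`, and choose monomials of weight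
greater than `d` forming a basis of the span of all such monomials in `A_Q`. If `f` agrees with
`Q + P`, where `P` is a combination of the chosen monomials, up to terms of weight `k > d`, then the
weight `k` part of `f - Q - P` is a combination of chosen monomials of weight `k` plus
`∑ bᵢ ∂ᵢQ` with `bᵢ` quasihomogeneous of degree `wᵢ + k - d`. By Taylor's formula the change of
coordinates `zᵢ ↦ zᵢ - bᵢ(z)` removes the second summand modulo terms of weight greater than `k`,
so the remainder can be pushed to arbitrarily high weighted order.

By the Nullstellensatz the Jacobian ideal of `Q` contains every monomial of large weight, and
Nakayama's lemma transfers this to the Jacobian ideal `J` of `Q + P`, with a bound independent of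
`P`. A remainder of sufficiently high order thus lies in `𝔪 J²`, where it is absorbed by Tougeron's
theorem: along `z ↦ z + ∇(Q + P)(z) y(z)` the function `Q + P` changes by a quadratic expression in
`∇(Q + P)`, and the implicit function theorem provides the matrix `y`.
-/

/-! ### Weighted filtrations -/

section WeightedIdeal

open MvPolynomial

variable {σ R A B : Type*} [CommRing R] [CommRing A] [CommRing B] [Algebra R A] {w : σ → ℕ}

/-- The ideal of elements of weighted order at least `k`, when each `x i` is given the weight
`w i`: it is generated by the monomials in the `x i` of weighted degree at least `k`. -/
def weightedIdeal (w : σ → ℕ) (x : σ → A) (k : ℕ) : Ideal A :=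
  Ideal.span ((fun m : σ →₀ ℕ => m.prod fun i e => x i ^ e) '' {m | k ≤ Finsupp.weight w m})

lemma weightedIdeal_antitone (w : σ → ℕ) (x : σ → A) : Antitone (weightedIdeal w x) :=
  fun _ _ hjk => Ideal.span_mono (Set.image_mono fun _ hm => le_trans hjk hm)

lemma prod_pow_mem_weightedIdeal (x : σ → A) {m : σ →₀ ℕ} {k : ℕ} (hm : k ≤ Finsupp.weight w m) :
    (m.prod fun i e => x i ^ e) ∈ weightedIdeal w x k :=
  Ideal.subset_span ⟨m, hm, rfl⟩

lemma mem_weightedIdeal_self (w : σ → ℕ) (x : σ → A) (i : σ) : x i ∈ weightedIdeal w x (w i) := by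
  simpa using prod_pow_mem_weightedIdeal (w := w) x (m := Finsupp.single i 1)
    (by simp [Finsupp.weight_single])

lemma weightedIdeal_zero (w : σ → ℕ) (x : σ → A) : weightedIdeal w x 0 = ⊤ :=
  (Ideal.eq_top_iff_one _).2 <| by
    simpa using prod_pow_mem_weightedIdeal (w := w) x (m := 0) (Nat.zero_le _)

lemma weightedIdeal_mul_le (w : σ → ℕ) (x : σ → A) (j k : ℕ) :
    weightedIdeal w x j * weightedIdeal w x k ≤ weightedIdeal w x (j + k) := by
  rw [weightedIdeal, weightedIdeal, Ideal.span_mul_span', Ideal.span_le]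
  rintro _ ⟨_, ⟨m, hm, rfl⟩, _, ⟨m', hm', rfl⟩, rfl⟩
  have hprod := Finsupp.prod_add_index' (f := m) (g := m') (h := fun i e => x i ^ e)
    (fun _ => pow_zero _) (fun _ _ _ => pow_add _ _ _)
  simp only [← hprod, SetLike.mem_coe]
  exact prod_pow_mem_weightedIdeal x ((map_add (Finsupp.weight w) m m').symm ▸ add_le_add hm hm')

lemma mul_mem_weightedIdeal {x : σ → A} {j k l : ℕ} {a b : A} (ha : a ∈ weightedIdeal w x j)
    (hb : b ∈ weightedIdeal w x k) (hl : l ≤ j + k) : a * b ∈ weightedIdeal w x l :=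
  weightedIdeal_antitone w x hl (weightedIdeal_mul_le w x j k (Ideal.mul_mem_mul ha hb))

lemma weightedIdeal_le_of_mul_le {F : ℕ → Ideal A} (hanti : Antitone F) (hzero : F 0 = ⊤)
    (hmul : ∀ j k, F j * F k ≤ F (j + k)) {x : σ → A} (hx : ∀ i, x i ∈ F (w i)) (k : ℕ) :
    weightedIdeal w x k ≤ F k := by
  have hpow (i : σ) (e : ℕ) : x i ^ e ∈ F (e * w i) := by
    induction e with
    | zero => simp [hzero]
    | succ e ih =>
      exact pow_succ (x i) e ▸ e.succ_mul (w i) ▸ hmul _ _ (Ideal.mul_mem_mul ih (hx i))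
  have hmonomial (m : σ →₀ ℕ) : (m.prod fun i e => x i ^ e) ∈ F (Finsupp.weight w m) := by
    induction m using Finsupp.induction_linear with
    | zero => simp [hzero]
    | add m m' ihm ihm' =>
      rw [Finsupp.prod_add_index' (fun _ => pow_zero _) (fun _ _ _ => pow_add _ _ _), map_add]
      exact hmul _ _ (Ideal.mul_mem_mul ihm ihm')
    | single i e => simpa [Finsupp.weight_single] using hpow i e
  rw [weightedIdeal, Ideal.span_le]
  rintro _ ⟨m, hm, rfl⟩
  exact hanti hm (hmonomial m)

lemma map_weightedIdeal (φ : A →+* B) (w : σ → ℕ) (x : σ → A) (k : ℕ) :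
    (weightedIdeal w x k).map φ = weightedIdeal w (φ ∘ x) k := by
  simp only [weightedIdeal, Ideal.map_span, Set.image_image, Finsupp.prod, map_prod, map_pow,
    Function.comp_apply]

lemma aeval_mem_weightedIdeal (x : σ → A) {k : ℕ} {p : MvPolynomial σ R}
    (hp : p ∈ weightedIdeal w X k) : aeval x p ∈ weightedIdeal w x k := by
  have hmap := Ideal.mem_map_of_mem (aeval (R := R) x).toRingHom hp
  rw [map_weightedIdeal] at hmap
  simpa [Function.comp_def] using hmap

lemma mem_weightedIdeal_X_iff {k : ℕ} {p : MvPolynomial σ R} :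
    p ∈ weightedIdeal w X k ↔ ∀ m ∈ p.support, k ≤ Finsupp.weight w m := by
  have hspan : weightedIdeal w X k =
      Ideal.span ((fun m => monomial m (1 : R)) '' {m | k ≤ Finsupp.weight w m}) := by
    simp only [weightedIdeal, monomial_eq, C_1, one_mul]
  rw [hspan, mem_ideal_span_monomial_image]
  refine forall₂_congr fun m _ => ⟨?_, fun hm => ⟨m, hm, le_rfl⟩⟩
  rintro ⟨m', hm', hle⟩
  rw [← tsub_add_cancel_of_le hle, map_add]
  exact le_add_left hm'

lemma weightedIdeal_trans {τ : Type*} {v : τ → ℕ} {x : σ → A} {y : τ → A}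
    (hy : ∀ i, y i ∈ weightedIdeal w x (v i)) (k : ℕ) : weightedIdeal v y k ≤ weightedIdeal w x k :=
  weightedIdeal_le_of_mul_le (weightedIdeal_antitone w x) (weightedIdeal_zero w x)
    (weightedIdeal_mul_le w x) hy k

lemma map_mem_weightedIdeal {x : σ → A} (φ : A →+* A) (hφ : ∀ i, φ (x i) ∈ weightedIdeal w x (w i))
    {k : ℕ} {a : A} (ha : a ∈ weightedIdeal w x k) : φ a ∈ weightedIdeal w x k :=
  weightedIdeal_trans hφ k (map_weightedIdeal φ w x k ▸ Ideal.mem_map_of_mem φ ha)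

lemma span_range_pow_le_weightedIdeal (hw : ∀ i, 0 < w i) (x : σ → A) (k : ℕ) :
    Ideal.span (Set.range x) ^ k ≤ weightedIdeal w x k := by
  have hspan : Ideal.span (Set.range x) ≤ weightedIdeal w x 1 := by
    rw [Ideal.span_le]
    rintro _ ⟨i, rfl⟩
    exact weightedIdeal_antitone w x (hw i) (mem_weightedIdeal_self w x i)
  induction k with
  | zero => exact weightedIdeal_zero w x ▸ le_top
  | succ k ih => exact pow_succ (Ideal.span (Set.range x)) k ▸
      (Ideal.mul_mono ih hspan).trans (weightedIdeal_mul_le w x k 1)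

lemma weightedIdeal_le_pow {I : Ideal A} {x : σ → A} (hx : ∀ i, x i ∈ I ^ w i) (k : ℕ) :
    weightedIdeal w x k ≤ I ^ k :=
  weightedIdeal_le_of_mul_le (F := (I ^ ·)) (fun _ _ => Ideal.pow_le_pow_right) (by simp)
    (fun j k => (pow_add I j k).ge) hx k

lemma weight_le_mul_weight_one {W : ℕ} (hW : ∀ i, w i ≤ W) (m : σ →₀ ℕ) :
    Finsupp.weight w m ≤ W * Finsupp.weight 1 m := by
  simp only [Finsupp.weight_apply, Finsupp.sum, Finset.mul_sum, smul_eq_mul, Pi.one_apply, mul_one]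
  exact Finset.sum_le_sum fun i _ => (mul_comm W _).symm ▸ Nat.mul_le_mul_left _ (hW i)

lemma weightedIdeal_mul_le_span_range_pow {W : ℕ} (hW : ∀ i, w i ≤ W) (hW₀ : 0 < W) (x : σ → A)
    (k : ℕ) : weightedIdeal w x (W * k) ≤ Ideal.span (Set.range x) ^ k := by
  have hdegree : weightedIdeal w x (W * k) ≤ weightedIdeal 1 x k :=
    Ideal.span_mono <| Set.image_mono fun m hm =>
      Nat.le_of_mul_le_mul_left (le_trans hm (weight_le_mul_weight_one hW m)) hW₀
  have hgen (i : σ) : x i ∈ Ideal.span (Set.range x) ^ (1 : σ → ℕ) i := by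
    simpa using Ideal.subset_span (Set.mem_range_self i)
  exact hdegree.trans (weightedIdeal_le_pow hgen k)

end WeightedIdeal

section Taylor

open MvPolynomial

open scoped Matrix

variable {σ R A : Type*} [CommRing R] [CommRing A] [Algebra R A] {w : σ → ℕ}

lemma pderiv_mem_weightedIdeal_X {k : ℕ} {p : MvPolynomial σ R} (hp : p ∈ weightedIdeal w X k)
    (i : σ) : pderiv i p ∈ weightedIdeal w X (k - w i) := by
  rw [mem_weightedIdeal_X_iff] at hp ⊢
  intro m hm
  rw [mem_support_iff, coeff_pderiv] at hm
  have hweight := hp _ (mem_support_iff.2 (left_ne_zero_of_mul hm))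
  rw [map_add, Finsupp.weight_single, one_smul] at hweight
  exact Nat.sub_le_of_le_add hweight

lemma mem_weightedIdeal_X_of_mul_X {k : ℕ} {p : MvPolynomial σ R} {i : σ}
    (hp : p * X i ∈ weightedIdeal w X k) : p ∈ weightedIdeal w X (k - w i) := by
  rw [mem_weightedIdeal_X_iff] at hp ⊢
  intro m hm
  have hweight := hp (m + Finsupp.single i 1) (by simpa [support_mul_X] using hm)
  rw [map_add, Finsupp.weight_single, one_smul] at hweight
  exact Nat.sub_le_of_le_add hweight

/-- The gradient of the polynomial `p` at a point `x` with coordinates in an `R`-algebra. -/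
noncomputable def gradientAt (p : MvPolynomial σ R) (x : σ → A) : σ → A :=
  fun i => aeval x (pderiv i p)

lemma gradientAt_add (p q : MvPolynomial σ R) (x : σ → A) :
    gradientAt (p + q) x = gradientAt p x + gradientAt q x := by
  ext i
  simp only [gradientAt, map_add, Pi.add_apply]

variable [Fintype σ]

/-- `H` is a remainder matrix of the second order Taylor expansion of `p`, its entries
depending on the variables (left summand of `σ ⊕ σ`) and their increments (right summand). -/
def IsTaylorRemainder (A : Type*) [CommRing A] [Algebra R A] (p : MvPolynomial σ R)
    (H : Matrix σ σ (MvPolynomial (σ ⊕ σ) R)) : Prop :=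
  ∀ x u : σ → A, aeval (x + u) p = aeval x p + u ⬝ᵥ gradientAt p x +
    u ⬝ᵥ H.map (aeval (Sum.elim x u)) *ᵥ u

lemma isTaylorRemainder_C (a : R) : IsTaylorRemainder A (C a : MvPolynomial σ R) 0 := by
  intro x u
  simp [dotProduct, gradientAt]

lemma IsTaylorRemainder.add {p q : MvPolynomial σ R} {H K : Matrix σ σ (MvPolynomial (σ ⊕ σ) R)}
    (hp : IsTaylorRemainder A p H) (hq : IsTaylorRemainder A q K) :
    IsTaylorRemainder A (p + q) (H + K) := by
  intro x u
  rw [map_add, map_add, hp x u, hq x u, Matrix.map_add _ (map_add _), gradientAt_add,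
    Matrix.add_mulVec, dotProduct_add, dotProduct_add]
  ring

lemma IsTaylorRemainder.mul_X [DecidableEq σ] {p : MvPolynomial σ R}
    {H : Matrix σ σ (MvPolynomial (σ ⊕ σ) R)} (hp : IsTaylorRemainder A p H) (k : σ) :
    IsTaylorRemainder A (p * X k) ((X (Sum.inl k) + X (Sum.inr k) : MvPolynomial (σ ⊕ σ) R) • H +
      Matrix.vecMulVec (fun i => rename Sum.inl (pderiv i p)) (Pi.single k 1)) := by
  intro x u
  have hgrad : gradientAt (p * X k) x = x k • gradientAt p x + aeval x p • Pi.single k 1 := by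
    ext i
    rcases eq_or_ne i k with rfl | hik
    · simp [gradientAt, mul_comm, add_comm]
    · simp [gradientAt, mul_comm, hik, hik.symm]
  have hmatrix : Matrix.map ((X (Sum.inl k) + X (Sum.inr k) : MvPolynomial (σ ⊕ σ) R) • H +
        Matrix.vecMulVec (fun i => rename Sum.inl (pderiv i p)) (Pi.single k 1))
        (aeval (Sum.elim x u)) = (x k + u k) • H.map (aeval (Sum.elim x u)) +
      Matrix.vecMulVec (gradientAt p x) (Pi.single k 1) := by
    ext i j
    rcases eq_or_ne j k with rfl | hjk
    · simp [gradientAt, Matrix.vecMulVec_apply, aeval_rename]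
    · simp [Matrix.vecMulVec_apply, hjk]
  rw [hmatrix, hgrad, map_mul, map_mul, hp x u, Matrix.add_mulVec, Matrix.smul_mulVec,
    Matrix.vecMulVec_mulVec]
  simp only [aeval_X, Pi.add_apply, dotProduct_add, dotProduct_smul, smul_eq_mul, dotProduct_single,
    mul_one, single_dotProduct, one_mul, op_smul_eq_smul]
  ring

lemma exists_isTaylorRemainder_monomial (A : Type*) [CommRing A] [Algebra R A] (m : σ →₀ ℕ) (a : R)
    {k : ℕ} (hm : monomial m a ∈ weightedIdeal w X k) :
    ∃ H, IsTaylorRemainder A (monomial m a) H ∧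
      ∀ i j, H i j ∈ weightedIdeal (Sum.elim w w) X (k - (w i + w j)) := by
  classical
  revert k
  refine induction_on_monomial (motive := fun q => ∀ {k}, q ∈ weightedIdeal w X k → ∃ H,
    IsTaylorRemainder A q H ∧ ∀ i j, H i j ∈ weightedIdeal (Sum.elim w w) X (k - (w i + w j)))
    (fun a k _ => ⟨0, isTaylorRemainder_C a, fun _ _ => zero_mem _⟩) ?_ m a
  intro p l ih k hk
  have hp := mem_weightedIdeal_X_of_mul_X hk
  obtain ⟨H, hH, hweight⟩ := ih hp
  refine ⟨_, hH.mul_X l, fun i j => Ideal.add_mem _ ?_ ?_⟩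
  · have hX : (X (Sum.inl l) + X (Sum.inr l) : MvPolynomial (σ ⊕ σ) R) ∈
        weightedIdeal (Sum.elim w w) X (w l) :=
      Ideal.add_mem _ (mem_weightedIdeal_self _ _ (Sum.inl l))
        (mem_weightedIdeal_self _ _ (Sum.inr l))
    exact mul_mem_weightedIdeal hX (hweight i j) (by omega)
  · have hrename : rename Sum.inl (pderiv i p) ∈
        weightedIdeal (Sum.elim w w) X (k - w l - w i) := by
      rw [rename_eq_aeval]
      exact weightedIdeal_trans (fun i => mem_weightedIdeal_self (Sum.elim w w) X (Sum.inl i)) _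
        (aeval_mem_weightedIdeal (X ∘ Sum.inl) (pderiv_mem_weightedIdeal_X hp i))
    rcases eq_or_ne j l with rfl | hjl
    · rw [Matrix.vecMulVec_apply, Pi.single_eq_same, mul_one]
      exact weightedIdeal_antitone _ _ (by omega) hrename
    · simp [Matrix.vecMulVec_apply, hjl]

lemma exists_isTaylorRemainder (A : Type*) [CommRing A] [Algebra R A] {k : ℕ}
    {p : MvPolynomial σ R} (hp : p ∈ weightedIdeal w X k) :
    ∃ H, IsTaylorRemainder A p H ∧
      ∀ i j, H i j ∈ weightedIdeal (Sum.elim w w) X (k - (w i + w j)) := by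
  rw [mem_weightedIdeal_X_iff] at hp
  rw [p.as_sum]
  refine Finset.sum_induction _ (fun q => ∃ H, IsTaylorRemainder A q H ∧
    ∀ i j, H i j ∈ weightedIdeal (Sum.elim w w) X (k - (w i + w j))) ?_ ?_ ?_
  · rintro p q ⟨H, hH, hHw⟩ ⟨K, hK, hKw⟩
    exact ⟨H + K, hH.add hK, fun i j => Ideal.add_mem _ (hHw i j) (hKw i j)⟩
  · exact ⟨0, C_0 (R := R) (σ := σ) ▸ isTaylorRemainder_C 0, fun _ _ => zero_mem _⟩
  · intro m hm
    refine exists_isTaylorRemainder_monomial A m _ (mem_weightedIdeal_X_iff.2 fun m' hm' => ?_)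
    rw [Finset.mem_singleton.1 (support_monomial_subset hm')]
    exact hp m hm

variable {x u : σ → A} {a k : ℕ} {p : MvPolynomial σ R}

lemma aeval_add_sub_sub_mem_weightedIdeal (hu : ∀ i, u i ∈ weightedIdeal w x (w i + a))
    (hp : p ∈ weightedIdeal w X k) :
    aeval (x + u) p - aeval x p - u ⬝ᵥ gradientAt p x ∈ weightedIdeal w x (k + 2 * a) := by
  obtain ⟨H, hH, hweight⟩ := exists_isTaylorRemainder A hp
  have hxu (i : σ ⊕ σ) : Sum.elim x u i ∈ weightedIdeal w x (Sum.elim w w i) := by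
    rcases i with i | i
    · exact mem_weightedIdeal_self w x i
    · exact weightedIdeal_antitone w x (Nat.le_add_right _ _) (hu i)
  have hentry (i j : σ) : aeval (Sum.elim x u) (H i j) ∈ weightedIdeal w x (k - (w i + w j)) :=
    weightedIdeal_trans hxu _ (aeval_mem_weightedIdeal _ (hweight i j))
  rw [hH x u, sub_sub, add_sub_cancel_left]
  simp only [dotProduct, Matrix.mulVec, Matrix.map_apply, Finset.mul_sum]
  refine Ideal.sum_mem _ fun i _ => Ideal.sum_mem _ fun j _ => ?_
  exact mul_mem_weightedIdeal (hu i) (mul_mem_weightedIdeal (hentry i j) (hu j) le_rfl) (by omega)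

lemma aeval_add_sub_mem_weightedIdeal (hu : ∀ i, u i ∈ weightedIdeal w x (w i + a))
    (hp : p ∈ weightedIdeal w X k) : aeval (x + u) p - aeval x p ∈ weightedIdeal w x (k + a) := by
  have hlinear : u ⬝ᵥ gradientAt p x ∈ weightedIdeal w x (k + a) :=
    Ideal.sum_mem _ fun i _ => mul_mem_weightedIdeal (hu i)
      (aeval_mem_weightedIdeal x (pderiv_mem_weightedIdeal_X hp i)) (by omega)
  have hquadratic := weightedIdeal_antitone w x (by omega : k + a ≤ k + 2 * a)
    (aeval_add_sub_sub_mem_weightedIdeal hu hp)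
  simpa using Ideal.add_mem _ hquadratic hlinear

end Taylor

/-! ### Jacobian ideals of quasihomogeneous polynomials -/

section Jacobian

open MvPolynomial

variable {σ R K : Type*} [CommRing R] [Field K] {w : σ → ℕ}

/-- The Jacobian ideal of `p`, generated by its partial derivatives; the local algebra of `p` is
the quotient by it. -/
noncomputable def jacobianIdeal (p : MvPolynomial σ R) : Ideal (MvPolynomial σ R) :=
  Ideal.span (Set.range fun i => pderiv i p)

/-- The dilation by `t` of type `w`, under which a quasihomogeneous polynomial of degree `d` is
multiplied by `t ^ d`. -/
def weightedDilation (w : σ → ℕ) (t : R) (z : σ → R) : σ → R :=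
  fun i => t ^ w i * z i

lemma eval_weightedDilation {p : MvPolynomial σ R} {k : ℕ} (hp : IsWeightedHomogeneous w p k)
    (t : R) (z : σ → R) : eval (weightedDilation w t z) p = t ^ k * eval z p := by
  rw [eval_eq, eval_eq, Finset.mul_sum]
  refine Finset.sum_congr rfl fun m hm => ?_
  have hweight : ∑ i ∈ m.support, w i * m i = k := by
    simpa [Finsupp.weight_apply, Finsupp.sum, mul_comm] using hp (mem_support_iff.1 hm)
  simp only [weightedDilation, mul_pow, Finset.prod_mul_distrib, ← pow_mul]
  rw [Finset.prod_pow_eq_pow_sum, hweight]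
  ring

lemma mem_weightedIdeal_X_of_isWeightedHomogeneous {p : MvPolynomial σ R} {k : ℕ}
    (hp : IsWeightedHomogeneous w p k) : p ∈ weightedIdeal w X k :=
  mem_weightedIdeal_X_iff.2 fun _ hm => (hp (mem_support_iff.1 hm)).ge

-- For `d < w i` the difference is truncated, but then `pderiv i p = 0`.
lemma isWeightedHomogeneous_pderiv {p : MvPolynomial σ R} {d : ℕ}
    (hp : IsWeightedHomogeneous w p d) (i : σ) :
    IsWeightedHomogeneous w (pderiv i p) (d - w i) := by
  intro m hm
  rw [coeff_pderiv] at hm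
  have hweight := hp (left_ne_zero_of_mul hm)
  rw [map_add, Finsupp.weight_single, one_smul] at hweight
  exact Nat.eq_sub_of_add_eq hweight

lemma notMem_vars_of_isWeightedHomogeneous {p : MvPolynomial σ R} {k : ℕ}
    (hp : IsWeightedHomogeneous w p k) {i : σ} (hi : k < w i) : i ∉ p.vars := by
  rw [mem_vars_iff_mem_support]
  rintro ⟨m, hm, him⟩
  have hweight := Finsupp.le_weight_of_ne_zero' w (Finsupp.mem_support_iff.1 him)
  rw [hp (mem_support_iff.1 hm)] at hweight
  exact hi.not_ge hweight

-- A variable of weight larger than `d` does not occur in `p`, so its axis is critical.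
lemma weight_le_of_forall_pderiv_eq_zero [Nontrivial R] {p : MvPolynomial σ R} {d : ℕ}
    (hp : IsWeightedHomogeneous w p d) (hcrit : ∀ i, eval 0 (pderiv i p) = 0)
    (hsing : ∀ z, (∀ i, eval z (pderiv i p) = 0) → z = 0) (i : σ) : w i ≤ d := by
  classical
  by_contra! hi
  have hzero : (Pi.single i 1 : σ → R) = 0 := hsing _ fun j => by
    rw [← hcrit j]
    have hvars : i ∉ (pderiv j p).vars :=
      notMem_vars_of_isWeightedHomogeneous (isWeightedHomogeneous_pderiv hp j)
        (lt_of_le_of_lt (Nat.sub_le d (w j)) hi)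
    refine eval₂Hom_congr' rfl (fun l hl _ => ?_) rfl
    exact Pi.single_eq_of_ne (ne_of_mem_of_not_mem hl hvars) 1
  exact one_ne_zero (α := R) (by simpa using congrFun hzero i)

section Cone

variable {𝕜 ι : Type*} [NontriviallyNormedField 𝕜]

lemma weightedDilation_zero (hw : ∀ i, 0 < w i) (z : σ → 𝕜) : weightedDilation w 0 z = 0 := by
  ext i
  simp [weightedDilation, (hw i).ne']

lemma tendsto_weightedDilation (hw : ∀ i, 0 < w i) (z : σ → 𝕜) :
    Tendsto (fun t => weightedDilation w t z) (𝓝 0) (𝓝 0) := by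
  have hcont : Continuous fun t => weightedDilation w t z := by
    unfold weightedDilation
    fun_prop
  exact weightedDilation_zero hw z ▸ hcont.tendsto 0

lemma eq_zero_of_weightedDilation_eq_zero {t : 𝕜} (ht : t ≠ 0) {z : σ → 𝕜}
    (hz : weightedDilation w t z = 0) : z = 0 := by
  ext i
  simpa [weightedDilation, ht] using congrFun hz i

-- Every punctured orbit of the dilations accumulates at `0`, so a cone isolated at `0` is `{0}`.
lemma eq_zero_of_isolated_common_zero (hw : ∀ i, 0 < w i) {p : ι → MvPolynomial σ 𝕜} {e : ι → ℕ}
    (hp : ∀ i, IsWeightedHomogeneous w (p i) (e i))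
    (hiso : ∀ᶠ z in 𝓝 0, (∀ i, eval z (p i) = 0) → z = 0) {z : σ → 𝕜}
    (hz : ∀ i, eval z (p i) = 0) : z = 0 := by
  have hnear : ∀ᶠ t in 𝓝[≠] (0 : 𝕜), (∀ i, eval (weightedDilation w t z) (p i) = 0) →
      weightedDilation w t z = 0 :=
    ((tendsto_weightedDilation hw z).mono_left nhdsWithin_le_nhds).eventually hiso
  obtain ⟨t, htz, ht⟩ := (hnear.and eventually_mem_nhdsWithin).exists
  exact eq_zero_of_weightedDilation_eq_zero ht <| htz fun i => by
    rw [eval_weightedDilation (hp i), hz i, mul_zero]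

end Cone

lemma exists_span_range_X_pow_le [IsAlgClosed K] [Finite σ] {J : Ideal (MvPolynomial σ K)}
    (hJ : ∀ z ∈ zeroLocus K J, z = 0) : ∃ r, Ideal.span (Set.range X) ^ r ≤ J := by
  have hrad : Ideal.span (Set.range X) ≤ J.radical := by
    rw [← vanishingIdeal_zeroLocus_eq_radical (K := K), Ideal.span_le]
    rintro _ ⟨i, rfl⟩
    rw [SetLike.mem_coe, mem_vanishingIdeal_iff]
    intro z hz
    simp [hJ z hz]
  exact Ideal.exists_pow_le_of_le_radical_of_fg hrad (Submodule.fg_span (Set.finite_range _))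

lemma exists_weightedIdeal_X_le_jacobianIdeal [IsAlgClosed K] [Finite σ] (w : σ → ℕ)
    {p : MvPolynomial σ K} (hsing : ∀ z, (∀ i, eval z (pderiv i p) = 0) → z = 0) :
    ∃ N, weightedIdeal w X N ≤ jacobianIdeal p := by
  obtain ⟨r, hr⟩ := exists_span_range_X_pow_le (J := jacobianIdeal p) fun z hz =>
    hsing z fun i => hz _ (Ideal.subset_span ⟨i, rfl⟩)
  obtain ⟨W, hW⟩ := Finite.exists_le w
  exact ⟨(W + 1) * r, (weightedIdeal_mul_le_span_range_pow (fun i => (hW i).trans W.le_succ)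
    W.succ_pos X r).trans hr⟩

lemma weightedHomogeneousComponent_mul {q : MvPolynomial σ R} {e : ℕ}
    (hq : IsWeightedHomogeneous w q e) (k : ℕ) (p : MvPolynomial σ R) :
    weightedHomogeneousComponent w (k + e) (p * q) = weightedHomogeneousComponent w k p * q := by
  induction p using MvPolynomial.induction_on' with
  | add p p' ihp ihp' => rw [add_mul, map_add, ihp, ihp', map_add, add_mul]
  | monomial m a =>
    have hm : IsWeightedHomogeneous w (monomial m a) (Finsupp.weight w m) :=
      isWeightedHomogeneous_monomial w m a rfl
    rcases eq_or_ne (Finsupp.weight w m) k with rfl | hk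
    · rw [(hm.mul hq).weightedHomogeneousComponent_same, hm.weightedHomogeneousComponent_same]
    · rw [(hm.mul hq).weightedHomogeneousComponent_ne _ (by omega),
        hm.weightedHomogeneousComponent_ne _ hk.symm, zero_mul]

lemma exists_isWeightedHomogeneous_sub_eq_sum_mul_pderiv [Fintype σ] {d k : ℕ}
    {Q p P : MvPolynomial σ R} (hQ : IsWeightedHomogeneous w Q d) (hwd : ∀ i, w i ≤ d) (hk : d ≤ k)
    (hp : IsWeightedHomogeneous w p k) (hpP : p - P ∈ jacobianIdeal Q) :
    ∃ b : σ → MvPolynomial σ R, (∀ i, IsWeightedHomogeneous w (b i) (w i + (k - d))) ∧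
      p - weightedHomogeneousComponent w k P = ∑ i, b i * pderiv i Q := by
  obtain ⟨c, hc⟩ := Ideal.mem_span_range_iff_exists_fun.1 hpP
  refine ⟨fun i => weightedHomogeneousComponent w (w i + (k - d)) (c i),
    fun i => weightedHomogeneousComponent_isWeightedHomogeneous _ _, ?_⟩
  have hcomponent := congrArg (weightedHomogeneousComponent w k) hc
  rw [map_sub, hp.weightedHomogeneousComponent_same, map_sum] at hcomponent
  rw [← hcomponent]
  refine Finset.sum_congr rfl fun i _ => ?_
  rw [← weightedHomogeneousComponent_mul (isWeightedHomogeneous_pderiv hQ i)]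
  congr 2
  have := hwd i
  omega

lemma weightedHomogeneousComponent_mem_restrictSupport {S : Set (σ →₀ ℕ)} {P : MvPolynomial σ R}
    (hP : P ∈ restrictSupport R S) (k : ℕ) :
    weightedHomogeneousComponent w k P ∈ restrictSupport R S := by
  classical
  rw [weightedHomogeneousComponent_apply]
  exact Submodule.sum_mem _ fun m hm =>
    (monomial_mem_restrictSupport R).2 (Or.inl (hP (Finset.mem_filter.1 hm).1))

lemma exists_monomials_linearIndepOn_quotient (J : Ideal (MvPolynomial σ K))
    (T : Set (σ →₀ ℕ)) :
    ∃ S ⊆ T, LinearIndepOn K (fun m => Ideal.Quotient.mk J (monomial m (1 : K))) S ∧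
      ∀ p ∈ restrictSupport K T, ∃ P ∈ restrictSupport K S, p - P ∈ J := by
  let v : (σ →₀ ℕ) → MvPolynomial σ K ⧸ J := fun m => Ideal.Quotient.mkₐ K J (monomial m 1)
  have himage (U : Set (σ →₀ ℕ)) :
      (restrictSupport K U).map (Ideal.Quotient.mkₐ K J).toLinearMap =
        Submodule.span K (v '' U) := by
    rw [restrictSupport_eq_span, Submodule.map_span, Set.image_image]
    rfl
  obtain ⟨S, hST, -, hspan, hindep⟩ :=
    exists_linearIndepOn_extension (linearIndepOn_empty K v) (Set.empty_subset T)
  refine ⟨S, hST, hindep, fun p hp => ?_⟩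
  have hpS : Ideal.Quotient.mkₐ K J p ∈
      (restrictSupport K S).map (Ideal.Quotient.mkₐ K J).toLinearMap :=
    himage S ▸ Submodule.span_le.2 hspan (himage T ▸ Submodule.mem_map_of_mem hp)
  obtain ⟨P, hP, hPp⟩ := hpS
  exact ⟨P, hP, Ideal.Quotient.eq.1 hPp.symm⟩

end Jacobian

/-! ### The ring of analytic germs -/

section Germs

open MvPolynomial

variable {𝕜 E F : Type*} [NontriviallyNormedField 𝕜] [NormedAddCommGroup E] [NormedSpace 𝕜 E]
  [NormedAddCommGroup F] [NormedSpace 𝕜 F]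

-- Hadamard's lemma; `G` sums the power series of `f` with one argument of each term left open.
lemma exists_analyticAt_eq_add_apply_self [CompleteSpace F] {f : E → F} (hf : AnalyticAt 𝕜 f 0) :
    ∃ G : E → (E →L[𝕜] F), AnalyticAt 𝕜 G 0 ∧ ∀ᶠ z in 𝓝 (0 : E), f z = f 0 + G z z := by
  obtain ⟨p, r, hp⟩ := hf
  have hradius : 0 < p.shift.radius := p.radius_shift.symm ▸ hp.r_pos.trans_le hp.r_le
  have hG := p.shift.hasFPowerSeriesOnBall hradius
  have hunshift : p.shift.unshift (f 0) = p := by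
    ext k v
    cases k with
    | zero => exact (hp.coeff_zero v).symm
    | succ k => simp [FormalMultilinearSeries.unshift, FormalMultilinearSeries.shift]
  have hsum := hunshift ▸ hG.unshift (z := f 0)
  have hmin : 0 < min r p.shift.radius := lt_min hp.r_pos hradius
  have heq := (hp.mono hmin (min_le_left _ _)).unique (hsum.mono hmin (min_le_right _ _))
  refine ⟨p.shift.sum, hG.analyticAt, ?_⟩
  filter_upwards [Metric.eball_mem_nhds (0 : E) hmin] with z hz
  simpa using heq hz

variable (𝕜 E) in
/-- The algebra of functions on `E` that are analytic at `0`. -/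
def analyticFunctions : Subalgebra 𝕜 (E → 𝕜) where
  carrier := {f | AnalyticAt 𝕜 f 0}
  mul_mem' := AnalyticAt.mul
  add_mem' := AnalyticAt.add
  algebraMap_mem' _ := analyticAt_const

variable (𝕜 E) in
/-- The ideal of functions vanishing identically near `0`. -/
def locallyZeroIdeal : Ideal (analyticFunctions 𝕜 E) where
  carrier := {f | ∀ᶠ z in 𝓝 (0 : E), f.1 z = 0}
  add_mem' {f g} hf hg := by
    filter_upwards [hf, hg] with z hfz hgz
    simp [hfz, hgz]
  zero_mem' := Eventually.of_forall fun _ => rfl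
  smul_mem' c f hf := by
    filter_upwards [hf] with z hfz
    simp [hfz]

variable (𝕜 E) in
/-- The ring of germs at `0` of analytic functions on `E`. -/
def AnalyticGerm : Type _ := analyticFunctions 𝕜 E ⧸ locallyZeroIdeal 𝕜 E

noncomputable instance : CommRing (AnalyticGerm 𝕜 E) :=
  inferInstanceAs (CommRing (analyticFunctions 𝕜 E ⧸ locallyZeroIdeal 𝕜 E))

noncomputable instance : Algebra 𝕜 (AnalyticGerm 𝕜 E) :=
  inferInstanceAs (Algebra 𝕜 (analyticFunctions 𝕜 E ⧸ locallyZeroIdeal 𝕜 E))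

/-- The germ at `0` of a function analytic at `0`. -/
def germ (f : E → 𝕜) (hf : AnalyticAt 𝕜 f 0) : AnalyticGerm 𝕜 E :=
  Ideal.Quotient.mk (locallyZeroIdeal 𝕜 E) ⟨f, hf⟩

lemma exists_germ_eq (a : AnalyticGerm 𝕜 E) : ∃ f hf, germ f hf = a := by
  obtain ⟨⟨f, hf⟩, rfl⟩ := Ideal.Quotient.mk_surjective a
  exact ⟨f, hf, rfl⟩

lemma germ_eq_germ_iff {f g : E → 𝕜} {hf : AnalyticAt 𝕜 f 0} {hg : AnalyticAt 𝕜 g 0} :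
    germ f hf = germ g hg ↔ ∀ᶠ z in 𝓝 0, f z = g z := by
  refine (Ideal.Quotient.eq (I := locallyZeroIdeal 𝕜 E)).trans ?_
  change (∀ᶠ z in 𝓝 0, f z - g z = 0) ↔ _
  simp only [sub_eq_zero]

lemma germ_add {f g : E → 𝕜} (hf : AnalyticAt 𝕜 f 0) (hg : AnalyticAt 𝕜 g 0) :
    germ f hf + germ g hg = germ (fun z => f z + g z) (hf.add hg) := rfl

lemma germ_sub {f g : E → 𝕜} (hf : AnalyticAt 𝕜 f 0) (hg : AnalyticAt 𝕜 g 0) :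
    germ f hf - germ g hg = germ (fun z => f z - g z) (hf.sub hg) := rfl

lemma germ_mul {f g : E → 𝕜} (hf : AnalyticAt 𝕜 f 0) (hg : AnalyticAt 𝕜 g 0) :
    germ f hf * germ g hg = germ (fun z => f z * g z) (hf.mul hg) := rfl

lemma germ_pow {f : E → 𝕜} (hf : AnalyticAt 𝕜 f 0) (k : ℕ) :
    germ f hf ^ k = germ (fun z => f z ^ k) (hf.pow k) := rfl

lemma germ_const (c : 𝕜) :
    germ (fun _ : E => c) analyticAt_const = algebraMap 𝕜 (AnalyticGerm 𝕜 E) c := rfl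

lemma germ_sum {ι : Type*} (s : Finset ι) (f : ι → E → 𝕜) (hf : ∀ i, AnalyticAt 𝕜 (f i) 0) :
    ∑ i ∈ s, germ (f i) (hf i) = germ (fun z => ∑ i ∈ s, f i z)
      (Finset.analyticAt_fun_sum s fun i _ => hf i) := by
  classical
  induction s using Finset.induction_on with
  | empty =>
    simp only [Finset.sum_empty]
    rfl
  | insert i s hi ih => simp only [Finset.sum_insert hi, ih, germ_add]

/-- Composition of germs with an analytic map fixing the origin. -/
noncomputable def pullback (ψ : E → F) (hψ : AnalyticAt 𝕜 ψ 0) (hψ₀ : ψ 0 = 0) :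
    AnalyticGerm 𝕜 F →ₐ[𝕜] AnalyticGerm 𝕜 E :=
  Ideal.Quotient.liftₐ (locallyZeroIdeal 𝕜 F)
    { toFun := fun f => germ (f.1 ∘ ψ) (AnalyticAt.comp (hψ₀.symm ▸ f.2) hψ)
      map_one' := rfl
      map_mul' := fun _ _ => rfl
      map_zero' := rfl
      map_add' := fun _ _ => rfl
      commutes' := fun _ => rfl }
    fun _ hf => germ_eq_germ_iff (hg := analyticAt_const).2 <|
      (hψ₀ ▸ hψ.continuousAt.tendsto : Tendsto ψ (𝓝 0) (𝓝 0)).eventually hf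

lemma pullback_germ {ψ : E → F} (hψ : AnalyticAt 𝕜 ψ 0) (hψ₀ : ψ 0 = 0) {f : F → 𝕜}
    (hf : AnalyticAt 𝕜 f 0) : pullback ψ hψ hψ₀ (germ f hf) =
      germ (fun z => f (ψ z)) (AnalyticAt.comp (hψ₀.symm ▸ hf) hψ) := rfl

variable {σ : Type*}

lemma aeval_germ {ψ : σ → E → 𝕜} (hψ : ∀ i, AnalyticAt 𝕜 (ψ i) 0) (p : MvPolynomial σ 𝕜) :
    aeval (fun i => germ (ψ i) (hψ i)) p =
      germ (fun z => eval (fun i => ψ i z) p) (AnalyticAt.aeval_mvPolynomial hψ p) := by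
  induction p using MvPolynomial.induction_on with
  | C a => simp only [aeval_C, eval_C, germ_const]
  | add p q hp hq =>
    simp only [map_add, hp, hq]
    exact germ_add _ _
  | mul_X p i hp =>
    simp only [map_mul, hp, aeval_X, eval_X]
    exact germ_mul _ _

variable [Fintype σ]

lemma analyticAt_coord (i : σ) (z : σ → 𝕜) : AnalyticAt 𝕜 (fun z : σ → 𝕜 => z i) z :=
  (ContinuousLinearMap.proj (R := 𝕜) (φ := fun _ : σ => 𝕜) i).analyticAt z

/-- The germ of the `i`-th coordinate function. -/
def coord (i : σ) : AnalyticGerm 𝕜 (σ → 𝕜) :=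
  germ (fun z => z i) (analyticAt_coord i 0)

lemma analyticAt_eval (p : MvPolynomial σ 𝕜) (z : σ → 𝕜) : AnalyticAt 𝕜 (fun z => eval z p) z :=
  AnalyticAt.aeval_mvPolynomial (fun i => analyticAt_coord i z) p

lemma aeval_coord (p : MvPolynomial σ 𝕜) :
    aeval coord p = germ (fun z => eval z p) (analyticAt_eval p 0) :=
  aeval_germ _ p

lemma germ_mem_span_coord_iff [CompleteSpace 𝕜] {f : (σ → 𝕜) → 𝕜} {hf : AnalyticAt 𝕜 f 0} :
    germ f hf ∈ Ideal.span (Set.range coord) ↔ f 0 = 0 := by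
  classical
  constructor
  · intro hmem
    obtain ⟨c, hc⟩ := Ideal.mem_span_range_iff_exists_fun.1 hmem
    choose g hg hgc using fun i => exists_germ_eq (c i)
    simp only [← hgc, coord, germ_mul] at hc
    rw [germ_sum _ (fun i z => g i z * z i), germ_eq_germ_iff] at hc
    simpa using hc.self_of_nhds.symm
  · intro hf₀
    obtain ⟨G, hG, hfG⟩ := exists_analyticAt_eq_add_apply_self hf
    have hGi (i : σ) : AnalyticAt 𝕜 (fun z => G z (Pi.single i 1)) 0 :=
      (ContinuousLinearMap.apply 𝕜 𝕜 (Pi.single i 1 : σ → 𝕜)).analyticAt _ |>.comp hG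
    refine Ideal.mem_span_range_iff_exists_fun.2 ⟨fun i => germ _ (hGi i), ?_⟩
    simp only [coord, germ_mul]
    rw [germ_sum _ (fun i z => G z (Pi.single i 1) * z i), germ_eq_germ_iff]
    filter_upwards [hfG] with z hz
    calc ∑ i, G z (Pi.single i 1) * z i = G z (∑ i, z i • Pi.single i 1) := by
          simp only [map_sum, map_smul, smul_eq_mul, mul_comm]
      _ = f z := by rw [← pi_eq_sum_univ' z, hz, hf₀, zero_add]

lemma isUnit_germ {f : E → 𝕜} (hf : AnalyticAt 𝕜 f 0) (hf₀ : f 0 ≠ 0) : IsUnit (germ f hf) := by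
  refine IsUnit.of_mul_eq_one (germ _ (hf.inv hf₀)) ?_
  rw [germ_mul, ← map_one (algebraMap 𝕜 (AnalyticGerm 𝕜 E)), ← germ_const, germ_eq_germ_iff]
  filter_upwards [hf.continuousAt.eventually_ne hf₀] with z hz
  exact mul_inv_cancel₀ hz

lemma span_coord_le_jacobson_bot [CompleteSpace 𝕜] :
    Ideal.span (Set.range (coord : σ → AnalyticGerm 𝕜 (σ → 𝕜))) ≤ Ideal.jacobson ⊥ := by
  intro a ha
  rw [Ideal.mem_jacobson_bot]
  intro b
  obtain ⟨f, hf, hfab⟩ := exists_germ_eq (a * b)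
  have hf₀ : f 0 = 0 := germ_mem_span_coord_iff.1 (hfab ▸ Ideal.mul_mem_right b _ ha)
  rw [← hfab, ← map_one (algebraMap 𝕜 (AnalyticGerm 𝕜 (σ → 𝕜))), ← germ_const, germ_add]
  exact isUnit_germ _ (by simp [hf₀])

variable {w : σ → ℕ}

lemma exists_isWeightedHomogeneous_sub_mem_weightedIdeal [CompleteSpace 𝕜] (hw : ∀ i, 0 < w i)
    {k : ℕ} {a : AnalyticGerm 𝕜 (σ → 𝕜)} (ha : a ∈ weightedIdeal w coord k) :
    ∃ p : MvPolynomial σ 𝕜, IsWeightedHomogeneous w p k ∧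
      a - aeval coord p ∈ weightedIdeal w coord (k + 1) := by
  induction ha using Submodule.span_induction with
  | mem a h =>
    obtain ⟨m, hm, rfl⟩ := h
    rcases eq_or_lt_of_le (show k ≤ Finsupp.weight w m from hm) with hk | hk
    · exact ⟨monomial m 1, isWeightedHomogeneous_monomial w m 1 hk.symm, by simp [aeval_monomial]⟩
    · exact ⟨0, isWeightedHomogeneous_zero 𝕜 w k, by
        simpa using prod_pow_mem_weightedIdeal coord hk⟩
  | zero => exact ⟨0, isWeightedHomogeneous_zero 𝕜 w k, by simp⟩
  | add a b _ _ iha ihb =>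
    obtain ⟨p, hp, hpa⟩ := iha
    obtain ⟨q, hq, hqb⟩ := ihb
    exact ⟨p + q, hp.add hq, by simpa [add_sub_add_comm] using Ideal.add_mem _ hpa hqb⟩
  | smul b a _ iha =>
    obtain ⟨p, hp, hpa⟩ := iha
    obtain ⟨f, hf, rfl⟩ := exists_germ_eq b
    have hvalue : germ f hf - algebraMap 𝕜 _ (f 0) ∈ weightedIdeal w coord 1 := by
      refine span_range_pow_le_weightedIdeal hw coord 1 ?_
      rw [pow_one, ← germ_const, germ_sub, germ_mem_span_coord_iff, sub_self]
    have hsplit : germ f hf • a - aeval coord (C (f 0) * p) = germ f hf * (a - aeval coord p) +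
        aeval coord p * (germ f hf - algebraMap 𝕜 _ (f 0)) := by
      simp only [map_mul, aeval_C, smul_eq_mul]
      ring
    refine ⟨C (f 0) * p, hp.C_mul _, hsplit ▸ Ideal.add_mem _ (Ideal.mul_mem_left _ _ hpa) ?_⟩
    exact mul_mem_weightedIdeal
      (aeval_mem_weightedIdeal coord (mem_weightedIdeal_X_of_isWeightedHomogeneous hp))
      hvalue le_rfl

end Germs

/-! ### Weighted order along dilations -/

section Order

open MvPolynomial

variable {𝕜 σ : Type*} [NontriviallyNormedField 𝕜] {w : σ → ℕ} {k : ℕ}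
  {l : Filter 𝕜}

lemma tendsto_div_pow_of_le (hl : l ≤ 𝓝[≠] 0) {g : 𝕜 → 𝕜} {d : ℕ} (hkd : k ≤ d)
    (hg : Tendsto (fun t => g t / t ^ d) l (𝓝 0)) : Tendsto (fun t => g t / t ^ k) l (𝓝 0) := by
  have hpow : Tendsto (fun t : 𝕜 => t ^ (d - k)) l (𝓝 (0 ^ (d - k))) :=
    ((continuous_pow (d - k)).tendsto 0).mono_left (hl.trans nhdsWithin_le_nhds)
  have hlim := hg.mul hpow
  rw [zero_mul] at hlim
  refine hlim.congr' ?_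
  filter_upwards [hl eventually_mem_nhdsWithin] with t ht
  rw [← Nat.sub_add_cancel hkd, pow_add, Nat.add_sub_cancel, mul_comm (t ^ _), ← div_div,
    div_mul_cancel₀ _ (pow_ne_zero _ ht)]

lemma eq_zero_of_isWeightedHomogeneous_of_eventually_eval_eq_zero (hw : ∀ i, 0 < w i)
    {p : MvPolynomial σ 𝕜} (hp : IsWeightedHomogeneous w p k) (hzero : ∀ᶠ z in 𝓝 0, eval z p = 0) :
    p = 0 := by
  have := NontriviallyNormedField.infinite 𝕜
  refine MvPolynomial.funext fun z => ?_
  obtain ⟨t, htz, ht⟩ := (((tendsto_weightedDilation hw z).mono_left nhdsWithin_le_nhds).eventually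
    hzero |>.and (eventually_mem_nhdsWithin (s := {0}ᶜ))).exists
  rw [eval_weightedDilation hp] at htz
  simpa using (mul_eq_zero.1 htz).resolve_left (pow_ne_zero k ht)

variable [Fintype σ]

lemma analyticAt_weightedDilation (w : σ → ℕ) (z : σ → 𝕜) (t : 𝕜) :
    AnalyticAt 𝕜 (fun t => weightedDilation w t z) t := by
  rw [analyticAt_pi_iff]
  unfold weightedDilation
  fun_prop

lemma exists_analyticAt_weightedDilation_eq_pow_mul (hw : ∀ i, 0 < w i) {f : (σ → 𝕜) → 𝕜}
    {hf : AnalyticAt 𝕜 f 0} (hfk : germ f hf ∈ weightedIdeal w coord k) (z : σ → 𝕜) :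
    ∃ h : 𝕜 → 𝕜, AnalyticAt 𝕜 h 0 ∧ ∀ᶠ t in 𝓝 0, f (weightedDilation w t z) = t ^ k * h t := by
  let τ := pullback _ (analyticAt_weightedDilation w z 0) (weightedDilation_zero hw z)
  let T : AnalyticGerm 𝕜 𝕜 := germ (fun t => t) analyticAt_id
  have hcoord (i : σ) : (τ ∘ coord) i ∈ Ideal.span {T} ^ w i := by
    rw [Ideal.span_singleton_pow, Ideal.mem_span_singleton]
    exact ⟨germ (fun _ => z i) analyticAt_const, rfl⟩
  have hτf : τ (germ f hf) ∈ Ideal.span {T} ^ k :=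
    weightedIdeal_le_pow hcoord k <|
      map_weightedIdeal τ.toRingHom w coord k ▸ Ideal.mem_map_of_mem τ.toRingHom hfk
  rw [Ideal.span_singleton_pow, Ideal.mem_span_singleton] at hτf
  obtain ⟨b, hb⟩ := hτf
  obtain ⟨h, hh, rfl⟩ := exists_germ_eq b
  rw [pullback_germ, germ_pow, germ_mul, germ_eq_germ_iff] at hb
  exact ⟨h, hh, hb⟩

lemma tendsto_div_pow_of_germ_mem_weightedIdeal (hw : ∀ i, 0 < w i) {f : (σ → 𝕜) → 𝕜}
    {hf : AnalyticAt 𝕜 f 0} (hfk : germ f hf ∈ weightedIdeal w coord (k + 1)) (z : σ → 𝕜) :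
    Tendsto (fun t => f (weightedDilation w t z) / t ^ k) (𝓝[≠] 0) (𝓝 0) := by
  obtain ⟨h, hh, hfh⟩ := exists_analyticAt_weightedDilation_eq_pow_mul hw hfk z
  have hlim : Tendsto (fun t => t * h t) (𝓝[≠] 0) (𝓝 0) :=
    tendsto_nhdsWithin_of_tendsto_nhds <| by
      simpa using (continuousAt_id (x := (0 : 𝕜))).tendsto.mul hh.continuousAt.tendsto
  refine hlim.congr' ?_
  filter_upwards [nhdsWithin_le_nhds hfh, eventually_mem_nhdsWithin] with t ht ht₀
  rw [ht, pow_succ, mul_assoc, mul_div_cancel_left₀ _ (pow_ne_zero k ht₀)]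

variable [l.NeBot]

lemma eval_eq_zero_of_tendsto_div_pow (hw : ∀ i, 0 < w i) (hl : l ≤ 𝓝[≠] 0) {f : (σ → 𝕜) → 𝕜}
    {hf : AnalyticAt 𝕜 f 0} {p : MvPolynomial σ 𝕜} (hp : IsWeightedHomogeneous w p k)
    (hfp : germ f hf - aeval coord p ∈ weightedIdeal w coord (k + 1)) {z : σ → 𝕜}
    (hlim : Tendsto (fun t => f (weightedDilation w t z) / t ^ k) l (𝓝 0)) : eval z p = 0 := by
  rw [aeval_coord, germ_sub] at hfp
  have hdiff := hlim.sub ((tendsto_div_pow_of_germ_mem_weightedIdeal hw hfp z).mono_left hl)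
  rw [sub_zero] at hdiff
  refine tendsto_nhds_unique (tendsto_const_nhds.congr' ?_) hdiff
  filter_upwards [hl eventually_mem_nhdsWithin] with t ht
  rw [eval_weightedDilation hp, ← sub_div, sub_sub_cancel,
    mul_div_cancel_left₀ _ (pow_ne_zero k ht)]

lemma germ_mem_weightedIdeal_of_tendsto [CompleteSpace 𝕜] (hw : ∀ i, 0 < w i) (hl : l ≤ 𝓝[≠] 0)
    {d : ℕ} {f : (σ → 𝕜) → 𝕜} (hf : AnalyticAt 𝕜 f 0)
    (hlim : ∀ᶠ z in 𝓝 0, Tendsto (fun t => f (weightedDilation w t z) / t ^ d) l (𝓝 0)) :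
    germ f hf ∈ weightedIdeal w coord (d + 1) := by
  suffices ∀ k ≤ d + 1, germ f hf ∈ weightedIdeal w coord k from this _ le_rfl
  intro k
  induction k with
  | zero => simp [weightedIdeal_zero]
  | succ k ih =>
    intro hkd
    obtain ⟨p, hp, hfp⟩ := exists_isWeightedHomogeneous_sub_mem_weightedIdeal hw (ih (by lia))
    have hp₀ : p = 0 :=
      eq_zero_of_isWeightedHomogeneous_of_eventually_eval_eq_zero hw hp <| hlim.mono fun z hz =>
        eval_eq_zero_of_tendsto_div_pow hw hl hp hfp (tendsto_div_pow_of_le hl (by lia) hz)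
    rwa [hp₀, map_zero, sub_zero] at hfp

end Order

/-! ### Biholomorphic germs and right equivalence -/

section RightEquivalence

variable {n : ℕ} {φ ι φ' ι' : (Fin n → ℂ) → (Fin n → ℂ)}

lemma IsGermBiholo.symm (h : IsGermBiholo φ ι) : IsGermBiholo ι φ :=
  ⟨h.2.1, h.1, h.2.2.2.1, h.2.2.1, h.2.2.2.2.2, h.2.2.2.2.1⟩

lemma IsGermBiholo.tendsto (h : IsGermBiholo φ ι) : Tendsto φ (𝓝 0) (𝓝 0) := by
  simpa only [h.2.2.1] using h.1.continuousAt.tendsto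

lemma IsGermBiholo.comp (h' : IsGermBiholo φ' ι') (h : IsGermBiholo φ ι) :
    IsGermBiholo (φ' ∘ φ) (ι ∘ ι') := by
  have hφ := h.tendsto
  have hι' := h'.symm.tendsto
  obtain ⟨hφan, hιan, hφ₀, hι₀, hιφ, hφι⟩ := h
  obtain ⟨hφ'an, hι'an, hφ'₀, hι'₀, hιφ', hφι'⟩ := h'
  refine ⟨hφ'an.comp_of_eq hφan hφ₀, hιan.comp_of_eq hι'an hι'₀, by simp [hφ₀, hφ'₀],
    by simp [hι₀, hι'₀], ?_, ?_⟩
  · filter_upwards [hιφ, hφ.eventually hιφ'] with z hz hz'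
    simp [hz, hz']
  · filter_upwards [hφι', hι'.eventually hφι] with z hz hz'
    simp [hz, hz']

lemma exists_isGermBiholo {D : (Fin n → ℂ) →L[ℂ] (Fin n → ℂ)} (hφ : AnalyticAt ℂ φ 0)
    (hφ₀ : φ 0 = 0) (hD : HasFDerivAt φ D 0) (hinj : ∀ v, D v = 0 → v = 0) :
    ∃ ι, IsGermBiholo φ ι := by
  let L := (LinearEquiv.ofInjectiveEndo D.toLinearMap
    (LinearMap.ker_eq_bot.1 (LinearMap.ker_eq_bot'.2 hinj))).toContinuousLinearEquiv
  have hL : HasFDerivAt φ (L : (Fin n → ℂ) →L[ℂ] (Fin n → ℂ)) 0 := hD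
  have hsmooth : ContDiffAt ℂ ⊤ φ 0 := hφ.contDiffAt
  have hstrict := hsmooth.hasStrictFDerivAt' hL (by simp)
  have hinv := (hsmooth.to_localInverse hL (by simp)).analyticAt
  have hinv₀ := hstrict.localInverse_apply_image
  have hright := hstrict.eventually_right_inverse
  rw [hφ₀] at hinv hinv₀ hright
  exact ⟨_, hφ, hinv, hφ₀, hinv₀, hstrict.eventually_left_inverse, hright⟩

/-- Right equivalence of function germs at the origin of `ℂⁿ`: they agree near `0` up to a
biholomorphic change of coordinates. -/
def RightEquivalent (f g : (Fin n → ℂ) → ℂ) : Prop :=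
  ∃ φ ι, IsGermBiholo φ ι ∧ ∀ᶠ z in 𝓝 0, f (ι z) = g z

variable {f g h : (Fin n → ℂ) → ℂ}

lemma RightEquivalent.refl (f : (Fin n → ℂ) → ℂ) : RightEquivalent f f :=
  ⟨id, id, ⟨analyticAt_id, analyticAt_id, rfl, rfl, by simp, by simp⟩, by simp⟩

lemma RightEquivalent.trans (hfg : RightEquivalent f g) (hgh : RightEquivalent g h) :
    RightEquivalent f h := by
  obtain ⟨φ, ι, hφ, hf⟩ := hfg
  obtain ⟨φ', ι', hφ', hg⟩ := hgh
  refine ⟨_, _, hφ'.comp hφ, ?_⟩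
  filter_upwards [hφ'.symm.tendsto.eventually hf, hg] with z hz hz'
  exact hz.trans hz'

lemma IsGermBiholo.rightEquivalent (h : IsGermBiholo φ ι) (f : (Fin n → ℂ) → ℂ) :
    RightEquivalent f fun z => f (φ z) :=
  ⟨ι, φ, h.symm, Eventually.of_forall fun _ => rfl⟩

lemma RightEquivalent.of_eventually_comp_eq (hφ : IsGermBiholo φ ι)
    (hgf : ∀ᶠ z in 𝓝 0, g (φ z) = f z) : RightEquivalent f g := by
  refine ⟨φ, ι, hφ, ?_⟩
  filter_upwards [hφ.symm.tendsto.eventually hgf, hφ.2.2.2.2.2] with z hz hφι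
  rw [← hz, hφι]

end RightEquivalence

section Triangular

open MvPolynomial
open scoped Matrix

variable {σ : Type*} {w : σ → ℕ}

lemma eval_zero_of_mem_weightedIdeal_X {R : Type*} [CommRing R] {p : MvPolynomial σ R} {k : ℕ}
    (hk : k ≠ 0) (hp : p ∈ weightedIdeal w X k) : eval 0 p = 0 := by
  rw [MvPolynomial.eval_zero, constantCoeff_eq]
  by_contra hcoeff
  have hle := mem_weightedIdeal_X_iff.1 hp 0 (mem_support_iff.2 hcoeff)
  rw [map_zero] at hle
  exact hk (Nat.le_zero.1 hle)

variable [Fintype σ]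

lemma eq_zero_of_strictlyTriangular_mulVec_eq {R : Type*} [Semiring R] {M : Matrix σ σ R}
    (hM : ∀ i j, w j ≤ w i → M i j = 0) {v : σ → R} (hv : M *ᵥ v = v) : v = 0 := by
  classical
  by_contra hne
  obtain ⟨i₀, hi₀⟩ := Function.ne_iff.1 hne
  obtain ⟨i, hi, hmax⟩ := Finset.exists_max_image {i | v i ≠ 0} w ⟨i₀, by simpa using hi₀⟩
  refine (Finset.mem_filter.1 hi).2 ?_
  rw [← hv]
  refine Finset.sum_eq_zero fun j _ => ?_
  rcases eq_or_ne (v j) 0 with hj | hj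
  · exact mul_eq_zero_of_right _ hj
  · exact mul_eq_zero_of_left (hM i j (hmax j (by simpa using hj))) _

lemma hasFDerivAt_eval {𝕜 : Type*} [NontriviallyNormedField 𝕜] (p : MvPolynomial σ 𝕜)
    (z : σ → 𝕜) : HasFDerivAt (fun z => eval z p)
      (∑ j, eval z (pderiv j p) • ContinuousLinearMap.proj (R := 𝕜) (φ := fun _ : σ => 𝕜) j) z := by
  classical
  induction p using MvPolynomial.induction_on with
  | C a =>
    simp only [eval_C]
    exact (hasFDerivAt_const a z).congr_fderiv (by ext; simp)
  | add p q hp hq =>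
    simp only [map_add]
    exact (hp.fun_add hq).congr_fderiv (by ext; simp [add_mul, Finset.sum_add_distrib])
  | mul_X p k hp =>
    have hk := (ContinuousLinearMap.proj (R := 𝕜) (φ := fun _ : σ => 𝕜) k).hasFDerivAt (x := z)
    simp only [map_mul, eval_X]
    refine (hp.mul hk).congr_fderiv ?_
    ext v
    simp [pderiv_X, Pi.single_apply, apply_ite (eval z), add_mul, Finset.sum_add_distrib,
      Finset.mul_sum, mul_assoc]

-- Ordering the coordinates by weight makes the linear part at the origin unipotent.
lemma exists_isGermBiholo_sub_eval {n a : ℕ} {w : Fin n → ℕ} (ha : a ≠ 0)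
    {b : Fin n → MvPolynomial (Fin n) ℂ} (hb : ∀ i, b i ∈ weightedIdeal w X (w i + a)) :
    ∃ ι, IsGermBiholo (fun z i => z i - eval z (b i)) ι := by
  have hderiv : HasFDerivAt (fun (z : Fin n → ℂ) i => z i - eval z (b i)) _ 0 :=
    hasFDerivAt_pi.2 fun i =>
      (ContinuousLinearMap.proj (R := ℂ) (φ := fun _ : Fin n => ℂ) i).hasFDerivAt.sub
        (hasFDerivAt_eval (b i) 0)
  refine exists_isGermBiholo ?_ ?_ hderiv fun v hv => ?_
  · exact analyticAt_pi_iff.2 fun i => (analyticAt_coord i 0).sub (analyticAt_eval (b i) 0)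
  · ext i
    simp [eval_zero_of_mem_weightedIdeal_X (by lia) (hb i), -eval_zero]
  · let M : Matrix (Fin n) (Fin n) ℂ := .of fun i j => eval 0 (pderiv j (b i))
    refine eq_zero_of_strictlyTriangular_mulVec_eq (w := w) (M := M) (fun i j hij => ?_) ?_
    · exact eval_zero_of_mem_weightedIdeal_X (by lia) (pderiv_mem_weightedIdeal_X (hb i) j)
    · ext i
      have hvi := congrFun hv i
      simp only [ContinuousLinearMap.coe_pi', sub_apply,
        ContinuousLinearMap.proj_apply, sum_apply,
        smul_apply, Pi.zero_apply, sub_eq_zero] at hvi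
      exact hvi.symm

end Triangular

/-! ### Tougeron's theorem -/

section QuadraticEquation

open scoped Matrix ContDiff

variable {𝕜 E F : Type*} [RCLike 𝕜] [NormedAddCommGroup E] [NormedSpace 𝕜 E]
  [NormedAddCommGroup F] [NormedSpace 𝕜 F]

lemma exists_analyticAt_add_eq [CompleteSpace E] [CompleteSpace F] {B : E × F → F} {a : E → F}
    (hB : AnalyticAt 𝕜 B 0) (hB₀ : B 0 = 0) (hB' : HasFDerivAt B (0 : E × F →L[𝕜] F) 0)
    (ha : AnalyticAt 𝕜 a 0) (ha₀ : a 0 = 0) :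
    ∃ y : E → F, AnalyticAt 𝕜 y 0 ∧ y 0 = 0 ∧ ∀ᶠ z in 𝓝 0, y z + B (z, y z) = a z := by
  let Φ : E × F → F := fun x => x.2 + B x - a x.1
  have haΦ : AnalyticAt 𝕜 (fun x : E × F => a x.1) 0 := ha.comp_of_eq analyticAt_fst rfl
  have hΦ : ContDiffAt 𝕜 ω Φ 0 := ((analyticAt_snd.add hB).sub haΦ).contDiffAt
  have hΦ' : HasFDerivAt Φ _ 0 :=
    (hasFDerivAt_snd.fun_add hB').fun_sub (ha.differentiableAt.hasFDerivAt.comp 0 hasFDerivAt_fst)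
  have hpartial : fderiv 𝕜 Φ 0 ∘L .inr 𝕜 E F = .id 𝕜 F := by
    rw [hΦ'.fderiv]
    ext v
    simp
  have hinv : (fderiv 𝕜 Φ 0 ∘L .inr 𝕜 E F).IsInvertible :=
    ⟨.refl 𝕜 F, hpartial.symm⟩
  refine ⟨hΦ.implicitFunction (by simp) hinv,
    (hΦ.contDiffAt_implicitFunction (by simp) hinv).analyticAt,
    hΦ.implicitFunction_apply_self (by simp) hinv, ?_⟩
  filter_upwards [hΦ.eventually_apply_implicitFunction (by simp) hinv] with z hz
  simpa [Φ, hB₀, ha₀, sub_eq_zero] using hz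

lemma hasFDerivAt_mul_zero {𝔸 : Type*} [NormedRing 𝔸] [NormedAlgebra 𝕜 𝔸] {f g : E → 𝔸} {x : E}
    (hf : DifferentiableAt 𝕜 f x) (hg : DifferentiableAt 𝕜 g x) (hfx : f x = 0) (hgx : g x = 0) :
    HasFDerivAt (fun z => f z * g z) (0 : E →L[𝕜] 𝔸) x :=
  (hf.hasFDerivAt.fun_mul' hg.hasFDerivAt).congr_fderiv (by ext; simp [hfx, hgx])

variable {σ : Type*} [Fintype σ] [DecidableEq σ]

attribute [local instance] Matrix.linftyOpNormedRing Matrix.linftyOpNormedAlgebra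

lemma analyticAt_matrix_iff {M : E → Matrix σ σ 𝕜} {x : E} :
    AnalyticAt 𝕜 M x ↔ ∀ i j, AnalyticAt 𝕜 (fun z => M z i j) x := by
  refine ⟨fun hM i j => ?_, fun hM => ?_⟩
  · exact ((Matrix.entryLinearMap 𝕜 𝕜 i j).toContinuousLinearMap.analyticAt _).comp hM
  · rw [show M = fun z => ∑ i, ∑ j, M z i j • Matrix.single i j (1 : 𝕜) by
      ext z : 1
      simpa [Matrix.smul_single] using Matrix.matrix_eq_sum_single (M z)]
    exact Finset.analyticAt_fun_sum _ fun i _ => Finset.analyticAt_fun_sum _ fun j _ =>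
      (hM i j).smul analyticAt_const

lemma exists_analyticAt_add_mul_mul_transpose_eq [CompleteSpace E]
    {K : E × Matrix σ σ 𝕜 → Matrix σ σ 𝕜} (hK : AnalyticAt 𝕜 K 0) {a : E → Matrix σ σ 𝕜}
    (ha : AnalyticAt 𝕜 a 0) (ha₀ : a 0 = 0) :
    ∃ y : E → Matrix σ σ 𝕜, AnalyticAt 𝕜 y 0 ∧ y 0 = 0 ∧
      ∀ᶠ z in 𝓝 0, y z + y z * K (z, y z) * (y z)ᵀ = a z := by
  have : CompleteSpace (Matrix σ σ 𝕜) := FiniteDimensional.complete 𝕜 _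
  have hy : AnalyticAt 𝕜 (fun x : E × Matrix σ σ 𝕜 => x.2) 0 := analyticAt_snd
  have hyt : AnalyticAt 𝕜 (fun x : E × Matrix σ σ 𝕜 => x.2ᵀ) 0 :=
    analyticAt_matrix_iff.2 fun i j => analyticAt_matrix_iff.1 hy j i
  have hyK := hy.mul hK
  refine exists_analyticAt_add_eq (B := fun x => x.2 * K x * x.2ᵀ) (hyK.mul hyt) (by simp) ?_ ha ha₀
  exact hasFDerivAt_mul_zero hyK.differentiableAt hyt.differentiableAt (by simp) (by simp)

end QuadraticEquation

section Tougeron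

open MvPolynomial

open scoped Matrix

variable {σ R A : Type*} [Fintype σ] [CommRing R] [CommRing A] [Algebra R A]

lemma aeval_add_gradientAt_vecMul {p : MvPolynomial σ R} {H : Matrix σ σ (MvPolynomial (σ ⊕ σ) R)}
    (hH : IsTaylorRemainder A p H) (x : σ → A) (y : Matrix σ σ A) :
    aeval (x + gradientAt p x ᵥ* y) p = aeval x p + gradientAt p x ⬝ᵥ
      (y + y * H.map (aeval (Sum.elim x (gradientAt p x ᵥ* y))) * yᵀ) *ᵥ gradientAt p x := by
  rw [hH, add_assoc, Matrix.add_mulVec, dotProduct_add, Matrix.dotProduct_mulVec _ y,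
    ← Matrix.mulVec_mulVec, ← Matrix.mulVec_mulVec, Matrix.mulVec_transpose,
    Matrix.dotProduct_mulVec _ y]

section DotProduct

variable {E 𝕜 : Type*} [NontriviallyNormedField 𝕜] [NormedAddCommGroup E] [NormedSpace 𝕜 E]
  {u v : σ → E → 𝕜}

lemma analyticAt_dotProduct {x : E} (hu : ∀ i, AnalyticAt 𝕜 (u i) x)
    (hv : ∀ i, AnalyticAt 𝕜 (v i) x) : AnalyticAt 𝕜 (fun z => (u · z) ⬝ᵥ (v · z)) x :=
  Finset.analyticAt_fun_sum .univ fun i _ => (hu i).fun_mul (hv i)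

lemma germ_dotProduct (hu : ∀ i, AnalyticAt 𝕜 (u i) 0) (hv : ∀ i, AnalyticAt 𝕜 (v i) 0) :
    (fun i => germ (u i) (hu i)) ⬝ᵥ (fun i => germ (v i) (hv i)) =
      germ _ (analyticAt_dotProduct hu hv) := by
  simp only [dotProduct, germ_mul]
  exact germ_sum _ (fun i z => u i z * v i z) _

end DotProduct

lemma exists_eq_dotProduct_of_mem_mul_span_range {I : Ideal A} {v : σ → A} {r : A}
    (hr : r ∈ I * Ideal.span (Set.range v)) : ∃ c : σ → A, (∀ i, c i ∈ I) ∧ r = c ⬝ᵥ v := by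
  obtain ⟨c, hc, rfl⟩ := (Submodule.mem_ideal_smul_span_iff_exists_sum I v r).1 hr
  exact ⟨c, hc, Finsupp.sum_fintype _ _ (by simp)⟩

lemma exists_eq_dotProduct_mulVec_of_mem_mul_span_range {I : Ideal A} {v : σ → A} {r : A}
    (hr : r ∈ I * Ideal.span (Set.range v) * Ideal.span (Set.range v)) :
    ∃ M : Matrix σ σ A, (∀ i j, M i j ∈ I) ∧ r = v ⬝ᵥ M *ᵥ v := by
  obtain ⟨c, hc, rfl⟩ := exists_eq_dotProduct_of_mem_mul_span_range hr
  choose M hM hcM using fun i => exists_eq_dotProduct_of_mem_mul_span_range (hc i)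
  exact ⟨M, hM, by rw [dotProduct_comm, funext hcM]; rfl⟩

attribute [local instance] Matrix.linftyOpNormedRing Matrix.linftyOpNormedAlgebra

variable {n : ℕ}

lemma exists_isGermBiholo_add_gradientAt_vecMul {g : MvPolynomial (Fin n) ℂ}
    (hcrit : ∀ i, eval 0 (pderiv i g) = 0) {y : (Fin n → ℂ) → Matrix (Fin n) (Fin n) ℂ}
    (hy : AnalyticAt ℂ y 0) (hy₀ : y 0 = 0) :
    ∃ ι, IsGermBiholo (fun z => z + gradientAt g z ᵥ* y z) ι := by
  have hyij := analyticAt_matrix_iff.1 hy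
  have hgrad (i : Fin n) : AnalyticAt ℂ (fun z => gradientAt g z i) 0 := analyticAt_eval _ 0
  have hgrad₀ : gradientAt g (0 : Fin n → ℂ) = 0 := funext hcrit
  have hderiv : HasFDerivAt (fun z => z + gradientAt g z ᵥ* y z)
      (.id ℂ _ + .pi fun _ => ∑ _i : Fin n, 0) 0 :=
    (hasFDerivAt_id 0).add <| hasFDerivAt_pi.2 fun j => HasFDerivAt.fun_sum (u := .univ) fun i _ =>
      hasFDerivAt_mul_zero (hgrad i).differentiableAt (hyij i j).differentiableAt
        (congrFun hgrad₀ i) (by simp [hy₀])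
  refine exists_isGermBiholo ?_ (by simp [hgrad₀]) hderiv fun v hv => ?_
  · exact analyticAt_id.add <| analyticAt_pi_iff.2 fun j =>
      analyticAt_dotProduct hgrad fun i => hyij i j
  · ext i
    simpa using congrFun hv i

lemma exists_isGermBiholo_eval_eq_add {g : MvPolynomial (Fin n) ℂ}
    (hcrit : ∀ i, eval 0 (pderiv i g) = 0) {a : (Fin n → ℂ) → Matrix (Fin n) (Fin n) ℂ}
    (ha : AnalyticAt ℂ a 0) (ha₀ : a 0 = 0) :
    ∃ φ ι, IsGermBiholo φ ι ∧ ∀ᶠ z in 𝓝 0,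
      eval (φ z) g = eval z g + gradientAt g z ⬝ᵥ a z *ᵥ gradientAt g z := by
  have hg : g ∈ weightedIdeal (0 : Fin n → ℕ) X 0 := by simp [weightedIdeal_zero]
  obtain ⟨H, hH, -⟩ := exists_isTaylorRemainder ℂ hg
  have hK : AnalyticAt ℂ (fun x : (Fin n → ℂ) × Matrix (Fin n) (Fin n) ℂ =>
      H.map (aeval (Sum.elim x.1 (gradientAt g x.1 ᵥ* x.2)))) 0 := by
    refine analyticAt_matrix_iff.2 fun i j => AnalyticAt.aeval_mvPolynomial (fun l => ?_) (H i j)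
    rcases l with l | l
    · exact (analyticAt_coord l 0).comp_of_eq analyticAt_fst rfl
    · exact analyticAt_dotProduct
        (fun i => (analyticAt_eval (pderiv i g) 0).comp_of_eq analyticAt_fst rfl)
        fun i => (analyticAt_matrix_iff (M := Prod.snd)).1 analyticAt_snd i l
  obtain ⟨y, hy, hy₀, hya⟩ := exists_analyticAt_add_mul_mul_transpose_eq hK ha ha₀
  obtain ⟨ι, hι⟩ := exists_isGermBiholo_add_gradientAt_vecMul hcrit hy hy₀
  refine ⟨_, ι, hι, ?_⟩
  filter_upwards [hya] with z hz
  rw [← hz]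
  exact aeval_add_gradientAt_vecMul hH z (y z)

theorem rightEquivalent_of_germ_sub_mem {f : (Fin n → ℂ) → ℂ} (hf : AnalyticAt ℂ f 0)
    {g : MvPolynomial (Fin n) ℂ} (hcrit : ∀ i, eval 0 (pderiv i g) = 0)
    (hfg : germ f hf - aeval coord g ∈ Ideal.span (Set.range (coord (𝕜 := ℂ))) *
      Ideal.span (Set.range (gradientAt g coord)) * Ideal.span (Set.range (gradientAt g coord))) :
    RightEquivalent f fun z => eval z g := by
  obtain ⟨M, hM, hfM⟩ := exists_eq_dotProduct_mulVec_of_mem_mul_span_range hfg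
  choose a ha haM using fun i j => exists_germ_eq (M i j)
  have ha₀ (i j : Fin n) : a i j 0 = 0 := germ_mem_span_coord_iff.1 (haM i j ▸ hM i j)
  obtain ⟨φ, ι, hφ, hφg⟩ := exists_isGermBiholo_eval_eq_add hcrit
    (a := fun z => .of fun i j => a i j z) (analyticAt_matrix_iff.2 ha) (Matrix.ext ha₀)
  have hgrad (i : Fin n) : AnalyticAt ℂ (fun z => gradientAt g z i) 0 := analyticAt_eval _ 0
  have hM_eq : M = fun i j => germ (a i j) (ha i j) := funext₂ fun i j => (haM i j).symm
  have hgrad_eq : gradientAt g coord = fun i => germ _ (hgrad i) := funext fun i => aeval_coord _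
  change _ = gradientAt g coord ⬝ᵥ fun i => M i ⬝ᵥ gradientAt g coord at hfM
  simp only [hM_eq, hgrad_eq, germ_dotProduct, aeval_coord, germ_sub, germ_eq_germ_iff] at hfM
  refine .of_eventually_comp_eq hφ ?_
  filter_upwards [hφg, hfM] with z hφz hfz
  exact hφz.trans (sub_eq_iff_eq_add'.1 hfz).symm

end Tougeron

/-! ### Normal forms -/

section NormalizationAlgebra

open MvPolynomial

open scoped Matrix

variable {σ R A : Type*} [Fintype σ] [CommRing R] [CommRing A] [Algebra R A] {w : σ → ℕ}

-- The first-order effect of `τ` on `Q` turns the weight `k` part `h` of `a` into `h'`; everything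
-- else it does has weight greater than `k`.
lemma map_sub_aeval_mem_weightedIdeal {d k : ℕ} (hk : d < k) {Q P h h' : MvPolynomial σ R}
    {b : σ → MvPolynomial σ R} (hQ : Q ∈ weightedIdeal w X d) (hP : P ∈ weightedIdeal w X (d + 1))
    (hh : h ∈ weightedIdeal w X k) (hb : ∀ i, b i ∈ weightedIdeal w X (w i + (k - d)))
    (hrel : h - h' = ∑ i, b i * pderiv i Q) {x : σ → A} {a : A}
    (ha : a - aeval x (Q + P) - aeval x h ∈ weightedIdeal w x (k + 1)) (τ : A →ₐ[R] A)
    (hτ : ∀ i, τ (x i) = x i - aeval x (b i)) :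
    τ a - aeval x (Q + (P + h')) ∈ weightedIdeal w x (k + 1) := by
  let u : σ → A := fun i => -aeval x (b i)
  have hu (i : σ) : u i ∈ weightedIdeal w x (w i + (k - d)) :=
    neg_mem (aeval_mem_weightedIdeal x (hb i))
  have hτu : ⇑τ ∘ x = x + u := funext fun i => (hτ i).trans (sub_eq_add_neg _ _)
  have hτaeval (p : MvPolynomial σ R) : τ (aeval x p) = aeval (x + u) p := by
    rw [comp_aeval_apply, ← hτu]
    rfl
  have hτx (i : σ) : τ (x i) ∈ weightedIdeal w x (w i) := by
    rw [show τ (x i) = x i + u i from congrFun hτu i]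
    exact add_mem (mem_weightedIdeal_self w x i)
      (weightedIdeal_antitone w x (Nat.le_add_right _ _) (hu i))
  have hremainder := map_mem_weightedIdeal τ.toRingHom hτx ha
  have hhigher := weightedIdeal_antitone w x (by omega : k + 1 ≤ k + (k - d))
    (aeval_add_sub_mem_weightedIdeal hu hh)
  have hprincipal := weightedIdeal_antitone w x (by omega : k + 1 ≤ d + 2 * (k - d))
    (aeval_add_sub_sub_mem_weightedIdeal hu hQ)
  have hlower := weightedIdeal_antitone w x (by omega : k + 1 ≤ d + 1 + (k - d))
    (aeval_add_sub_mem_weightedIdeal hu hP)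
  have hlinear : aeval x h' = aeval x h + u ⬝ᵥ gradientAt Q x := by
    rw [← sub_sub_cancel h h', hrel]
    simp [u, dotProduct, gradientAt, sub_eq_add_neg]
  convert add_mem (add_mem (add_mem hremainder hhigher) hprincipal) hlower using 1
  simp only [AlgHom.toRingHom_eq_coe, RingHom.coe_coe, map_sub, map_add, hτaeval, hlinear]
  ring

end NormalizationAlgebra

section Normalization

open MvPolynomial

variable {n d : ℕ} {w : Fin n → ℕ} {Q : MvPolynomial (Fin n) ℂ} {S : Set (Fin n →₀ ℕ)}
  {f : (Fin n → ℂ) → ℂ}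

lemma exists_rightEquivalent_germ_sub_mem_succ (hw : ∀ i, 0 < w i)
    (hQ : IsWeightedHomogeneous w Q d) (hwd : ∀ i, w i ≤ d)
    (hS : S ⊆ {m | d < Finsupp.weight w m})
    (hspan : ∀ p ∈ weightedIdeal w X (d + 1), ∃ P ∈ restrictSupport ℂ S, p - P ∈ jacobianIdeal Q)
    {k : ℕ} (hk : d < k) (hf : AnalyticAt ℂ f 0) {P : MvPolynomial (Fin n) ℂ}
    (hP : P ∈ restrictSupport ℂ S)
    (hfP : germ f hf - aeval coord (Q + P) ∈ weightedIdeal w coord k) :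
    ∃ g, ∃ hg : AnalyticAt ℂ g 0, RightEquivalent f g ∧ ∃ P' ∈ restrictSupport ℂ S,
      germ g hg - aeval coord (Q + P') ∈ weightedIdeal w coord (k + 1) := by
  obtain ⟨h, hh, hfh⟩ := exists_isWeightedHomogeneous_sub_mem_weightedIdeal hw hfP
  have hhk := mem_weightedIdeal_X_of_isWeightedHomogeneous hh
  obtain ⟨P₁, hP₁, hhP₁⟩ := hspan h (weightedIdeal_antitone w X hk hhk)
  obtain ⟨b, hb, hrel⟩ := exists_isWeightedHomogeneous_sub_eq_sum_mul_pderiv hQ hwd hk.le hh hhP₁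
  have hbw (i : Fin n) := mem_weightedIdeal_X_of_isWeightedHomogeneous (hb i)
  obtain ⟨ι, hψ⟩ := exists_isGermBiholo_sub_eval (Nat.sub_ne_zero_of_lt hk) hbw
  let τ := pullback _ hψ.1 hψ.2.2.1
  have hτ (i : Fin n) : τ (coord i) = coord i - aeval coord (b i) := by
    rw [aeval_coord]
    rfl
  have hg : AnalyticAt ℂ (fun z => f fun i => z i - eval z (b i)) 0 :=
    hf.comp_of_eq hψ.1 hψ.2.2.1
  exact ⟨_, hg, hψ.rightEquivalent f, P + weightedHomogeneousComponent w k P₁,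
    add_mem hP (weightedHomogeneousComponent_mem_restrictSupport hP₁ k),
    map_sub_aeval_mem_weightedIdeal hk (mem_weightedIdeal_X_of_isWeightedHomogeneous hQ)
      (mem_weightedIdeal_X_iff.2 fun m hm => hS (hP hm)) hhk hbw hrel hfh τ hτ⟩

lemma exists_rightEquivalent_germ_sub_mem (hw : ∀ i, 0 < w i)
    (hQ : IsWeightedHomogeneous w Q d) (hwd : ∀ i, w i ≤ d)
    (hS : S ⊆ {m | d < Finsupp.weight w m})
    (hspan : ∀ p ∈ weightedIdeal w X (d + 1), ∃ P ∈ restrictSupport ℂ S, p - P ∈ jacobianIdeal Q)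
    (hf : AnalyticAt ℂ f 0) (hfQ : germ f hf - aeval coord Q ∈ weightedIdeal w coord (d + 1))
    (k : ℕ) :
    ∃ g, ∃ hg : AnalyticAt ℂ g 0, RightEquivalent f g ∧ ∃ P ∈ restrictSupport ℂ S,
      germ g hg - aeval coord (Q + P) ∈ weightedIdeal w coord (d + 1 + k) := by
  induction k with
  | zero => exact ⟨f, hf, .refl f, 0, zero_mem _, by simpa using hfQ⟩
  | succ k ih =>
    obtain ⟨g, hg, hfg, P, hP, hgP⟩ := ih
    obtain ⟨g', hg', hgg', hP'⟩ :=
      exists_rightEquivalent_germ_sub_mem_succ hw hQ hwd hS hspan (by omega) hg hP hgP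
    exact ⟨g', hg', hfg.trans hgg', hP'⟩

end Normalization

/-! ### Finite determinacy -/

section GradientIdeal

open MvPolynomial

variable {σ R A : Type*} [CommRing R] [CommRing A] [Algebra R A] {w : σ → ℕ} {d : ℕ}
  {Q P : MvPolynomial σ R}

lemma weightedIdeal_le_span_gradientAt_sup_succ [Finite σ] (hQ : IsWeightedHomogeneous w Q d)
    (hwd : ∀ i, w i ≤ d) (hP : P ∈ weightedIdeal w X (d + 1)) {k : ℕ} (hk : d ≤ k)
    (hQk : weightedIdeal w X k ≤ jacobianIdeal Q) (x : σ → A) :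
    weightedIdeal w x k ≤
      Ideal.span (Set.range (gradientAt (Q + P) x)) ⊔ weightedIdeal w x (k + 1) := by
  cases nonempty_fintype σ
  refine Ideal.span_le.2 ?_
  rintro _ ⟨m, hm, rfl⟩
  rcases eq_or_lt_of_le (show k ≤ Finsupp.weight w m from hm) with hmk | hmk
  · have hhom := isWeightedHomogeneous_monomial w m (1 : R) hmk.symm
    obtain ⟨b, hb, hrel⟩ := exists_isWeightedHomogeneous_sub_eq_sum_mul_pderiv (P := 0) hQ hwd hk
      hhom (by simpa using hQk (mem_weightedIdeal_X_of_isWeightedHomogeneous hhom))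
    have hsum : (m.prod fun i e => x i ^ e) =
        ∑ i, aeval x (b i) * gradientAt (Q + P) x i - ∑ i, aeval x (b i) * gradientAt P x i := by
      rw [map_zero, sub_zero] at hrel
      simpa [aeval_monomial, gradientAt, mul_add, Finset.sum_add_distrib] using
        congrArg (aeval x) hrel
    simp only [hsum]
    refine sub_mem (Ideal.mem_sup_left ?_) (Ideal.mem_sup_right ?_)
    · exact Ideal.sum_mem _ fun i _ => Ideal.mul_mem_left _ _ (Ideal.subset_span ⟨i, rfl⟩)
    · exact Ideal.sum_mem _ fun i _ => mul_mem_weightedIdeal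
        (aeval_mem_weightedIdeal x (mem_weightedIdeal_X_of_isWeightedHomogeneous (hb i)))
        (aeval_mem_weightedIdeal x (pderiv_mem_weightedIdeal_X hP i)) (by grind)
  · exact Ideal.mem_sup_right (prod_pow_mem_weightedIdeal x hmk)

lemma weightedIdeal_le_span_gradientAt_sup [Finite σ] (hQ : IsWeightedHomogeneous w Q d)
    (hwd : ∀ i, w i ≤ d) (hP : P ∈ weightedIdeal w X (d + 1)) {N : ℕ} (hN : d ≤ N)
    (hQN : weightedIdeal w X N ≤ jacobianIdeal Q) (x : σ → A) (k : ℕ) :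
    weightedIdeal w x N ≤ Ideal.span (Set.range (gradientAt (Q + P) x)) ⊔ weightedIdeal w x k := by
  induction k with
  | zero => exact weightedIdeal_zero w x ▸ le_sup_of_le_right le_top
  | succ k ih =>
    rcases le_or_gt N k with hNk | hkN
    · exact ih.trans <| sup_le le_sup_left <| weightedIdeal_le_span_gradientAt_sup_succ hQ hwd hP
        (hN.trans hNk) ((weightedIdeal_antitone w X hNk).trans hQN) x
    · exact le_sup_of_le_right (weightedIdeal_antitone w x hkN)

lemma span_range_pow_le_span_gradientAt [Finite σ] (hw : ∀ i, 0 < w i)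
    (hQ : IsWeightedHomogeneous w Q d) (hwd : ∀ i, w i ≤ d) (hP : P ∈ weightedIdeal w X (d + 1))
    {N : ℕ} (hN : d ≤ N) (hQN : weightedIdeal w X N ≤ jacobianIdeal Q) {x : σ → A}
    (hx : Ideal.span (Set.range x) ≤ Ideal.jacobson ⊥) :
    Ideal.span (Set.range x) ^ N ≤ Ideal.span (Set.range (gradientAt (Q + P) x)) := by
  obtain ⟨W, hW⟩ := Finite.exists_le w
  have hfg : (Ideal.span (Set.range x) ^ N).FG :=
    Ideal.FG.pow (Submodule.fg_span (Set.finite_range x))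
  refine Submodule.le_of_le_smul_of_le_jacobson_bot hfg hx ?_
  rw [smul_eq_mul, ← pow_succ']
  exact (span_range_pow_le_weightedIdeal hw x N).trans <|
    (weightedIdeal_le_span_gradientAt_sup hQ hwd hP hN hQN x ((W + 1) * (N + 1))).trans <|
    sup_le_sup_left (weightedIdeal_mul_le_span_range_pow (fun i => (hW i).trans W.le_succ)
      W.succ_pos x (N + 1)) _

end GradientIdeal

section Determinacy

open MvPolynomial

variable {n d : ℕ} {w : Fin n → ℕ} {Q : MvPolynomial (Fin n) ℂ}

theorem exists_forall_rightEquivalent_of_germ_sub_mem (hw : ∀ i, 0 < w i)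
    (hQ : IsWeightedHomogeneous w Q d) (hcrit : ∀ i, eval 0 (pderiv i Q) = 0)
    (hsing : ∀ z, (∀ i, eval z (pderiv i Q) = 0) → z = 0) :
    ∃ k, ∀ P ∈ weightedIdeal w X (d + 1), ∀ f, ∀ hf : AnalyticAt ℂ f 0,
      germ f hf - aeval coord (Q + P) ∈ weightedIdeal w coord k →
        RightEquivalent f fun z => eval z (Q + P) := by
  have hwd := weight_le_of_forall_pderiv_eq_zero hQ hcrit hsing
  obtain ⟨W, hW⟩ := Finite.exists_le w
  obtain ⟨N₀, hN₀⟩ := exists_weightedIdeal_X_le_jacobianIdeal w hsing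
  set N := max d N₀
  have hQN := (weightedIdeal_antitone w X (le_max_right d N₀)).trans hN₀
  refine ⟨(W + 1) * (1 + N + N), fun P hP f hf hfP => ?_⟩
  have hpow := span_range_pow_le_span_gradientAt hw hQ hwd hP (le_max_left d N₀) hQN
    (span_coord_le_jacobson_bot (𝕜 := ℂ))
  have hcritP (i : Fin n) : eval 0 (pderiv i (Q + P)) = 0 := by
    rw [map_add, map_add, hcrit, zero_add]
    exact eval_zero_of_mem_weightedIdeal_X (Nat.sub_ne_zero_of_lt (Nat.lt_succ_of_le (hwd i)))
      (pderiv_mem_weightedIdeal_X hP i)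
  refine rightEquivalent_of_germ_sub_mem hf hcritP
    (Ideal.mul_mono (Ideal.mul_mono_right hpow) hpow ?_)
  have hmem := weightedIdeal_mul_le_span_range_pow (fun i => (hW i).trans W.le_succ) W.succ_pos
    coord _ hfP
  rwa [pow_add, pow_add, pow_one] at hmem

end Determinacy

section NormalForm

open MvPolynomial

theorem exists_rightEquivalent_add_eval {n d : ℕ} {w : Fin n → ℕ} (hw : ∀ i, 0 < w i)
    {Q : MvPolynomial (Fin n) ℂ} (hQ : IsWeightedHomogeneous w Q d)
    (hcrit : ∀ i, eval 0 (pderiv i Q) = 0)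
    (hsing : ∀ z, (∀ i, eval z (pderiv i Q) = 0) → z = 0) {f : (Fin n → ℂ) → ℂ}
    (hf : AnalyticAt ℂ f 0) (hfQ : germ f hf - aeval coord Q ∈ weightedIdeal w coord (d + 1)) :
    ∃ S ⊆ {m | d < Finsupp.weight w m},
      LinearIndepOn ℂ (fun m => Ideal.Quotient.mk (jacobianIdeal Q) (monomial m (1 : ℂ))) S ∧
      ∃ P ∈ restrictSupport ℂ S, RightEquivalent f fun z => eval z (Q + P) := by
  obtain ⟨S, hS, hindep, hspan⟩ :=
    exists_monomials_linearIndepOn_quotient (jacobianIdeal Q) {m | d < Finsupp.weight w m}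
  obtain ⟨k, hk⟩ := exists_forall_rightEquivalent_of_germ_sub_mem hw hQ hcrit hsing
  obtain ⟨g, hg, hfg, P, hP, hgP⟩ := exists_rightEquivalent_germ_sub_mem hw hQ
    (weight_le_of_forall_pderiv_eq_zero hQ hcrit hsing) hS
    (fun p hp => hspan p (mem_weightedIdeal_X_iff.1 hp)) hf hfQ k
  refine ⟨S, hS, hindep, P, hP, hfg.trans (hk P ?_ g hg ?_)⟩
  · exact mem_weightedIdeal_X_iff.2 fun m hm => hS (hP hm)
  · exact weightedIdeal_antitone w coord (Nat.le_add_left k (d + 1)) hgP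

lemma exists_eq_sum_smul_monomial {σ R : Type*} [CommSemiring R] {S : Set (σ →₀ ℕ)}
    {P : MvPolynomial σ R} (hP : P ∈ restrictSupport R S) :
    ∃ (s : ℕ) (e : Fin s → S) (c : Fin s → R), Function.Injective e ∧
      P = ∑ j, c j • monomial (e j : σ →₀ ℕ) 1 := by
  let q := P.support.equivFin.symm
  refine ⟨_, Set.codRestrict (fun j => (q j : σ →₀ ℕ)) S fun j => hP (q j).2,
    fun j => coeff (q j) P, (Subtype.val_injective.comp q.injective).codRestrict _, ?_⟩
  conv_lhs => rw [P.as_sum, ← Finset.sum_coe_sort, ← Equiv.sum_comp q]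
  simp [smul_monomial]

lemma map_ofReal_nhdsGT_zero_le : map ((↑) : ℝ → ℂ) (𝓝[>] 0) ≤ 𝓝[≠] 0 :=
  tendsto_nhdsWithin_iff.2 ⟨(Complex.continuous_ofReal.tendsto' 0 0 rfl).mono_left inf_le_left,
    eventually_mem_nhdsWithin.mono fun _ ht => Complex.ofReal_ne_zero.2 (ne_of_gt ht)⟩

end NormalForm

open MvPolynomial in
/-- **Theorem (Arnold).** A semiquasihomogeneous function `f = Q + F′` with
quasihomogeneous principal part `Q` (isolated singularity, quasihomogeneous degree `d`)
is right-equivalent to `Q + Σ c_j e_j`, where the `e_j` are monomials of weighted degree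
strictly greater than `d` taken from a monomial basis of the local algebra `A_Q`. -/
theorem stmt_11 (n : ℕ) (hn : 0 < n) (w : Fin n → ℕ) (hw : ∀ i, 0 < w i) (d : ℕ) (hd : 0 < d)
    (Q : MvPolynomial (Fin n) ℂ)
    -- `Q` is quasihomogeneous of type `w` and quasihomogeneous degree `d`
    (hQqh : ∀ m ∈ Q.support, ∑ i, w i * m i = d)
    -- `Q` has an isolated singularity at `0 ∈ ℂⁿ`
    (hQcrit : ∀ i, eval (0 : Fin n → ℂ) (pderiv i Q) = 0)
    (hQsing : ∀ᶠ z in 𝓝 (0 : Fin n → ℂ), (∀ i, eval z (pderiv i Q) = 0) → z = 0)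
    (f : (Fin n → ℂ) → ℂ) (hf : AnalyticAt ℂ f 0)
    -- `f = Q + F′` where every monomial of the Taylor series of `F′ = f − Q` has
    -- weighted degree strictly greater than `d`
    (hford : ∃ r > (0:ℝ), ∀ z : Fin n → ℂ, ‖z‖ < r →
      Tendsto (fun lam : ℝ =>
          (f (fun i => (lam : ℂ) ^ (w i) * z i) - eval (fun i => (lam : ℂ) ^ (w i) * z i) Q) /
            (lam : ℂ) ^ d)
        (𝓝[>] 0) (𝓝 0)) :
    ∃ φ ι : (Fin n → ℂ) → (Fin n → ℂ), IsGermBiholo φ ι ∧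
    ∃ (s : ℕ) (e : Fin s → (Fin n →₀ ℕ)) (c : Fin s → ℂ),
      -- the monomials `e j` have weighted degree strictly greater than `d`
      (∀ j, d < ∑ i, w i * e j i) ∧
      -- their residue classes in the local algebra `A_Q` are `ℂ`-linearly independent
      LinearIndependent ℂ (fun j => Ideal.Quotient.mk
        (Ideal.span (Set.range fun i => pderiv i Q)) (monomial (e j) (1:ℂ))) ∧
      -- `f ∘ φ⁻¹ = Q + Σ_j c_j e_j`
      (∀ᶠ z in 𝓝 (0 : Fin n → ℂ),
        f (ι z) = eval z Q + ∑ j, c j * eval z (monomial (e j) (1:ℂ))) := by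
  have hweight (m : Fin n →₀ ℕ) : ∑ i, w i * m i = Finsupp.weight w m := by
    simp only [Finsupp.weight_eq_sum, smul_eq_mul, mul_comm]
  simp only [hweight] at hQqh ⊢
  have hQ : IsWeightedHomogeneous w Q d := fun m hm => hQqh m (mem_support_iff.2 hm)
  have hsing (z : Fin n → ℂ) : (∀ i, eval z (pderiv i Q) = 0) → z = 0 :=
    eq_zero_of_isolated_common_zero hw (isWeightedHomogeneous_pderiv hQ) hQsing
  have hfQ : germ f hf - aeval coord Q ∈ weightedIdeal w coord (d + 1) := by
    obtain ⟨r, hr, hlim⟩ := hford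
    rw [aeval_coord, germ_sub]
    refine germ_mem_weightedIdeal_of_tendsto hw map_ofReal_nhdsGT_zero_le _ ?_
    filter_upwards [Metric.ball_mem_nhds 0 hr] with z hz
    exact tendsto_map'_iff.2 (hlim z (mem_ball_zero_iff.1 hz))
  obtain ⟨S, hS, hindep, P, hP, φ, ι, hφ, hfι⟩ :=
    exists_rightEquivalent_add_eval hw hQ hQcrit hsing hf hfQ
  obtain ⟨s, e, c, he, rfl⟩ := exists_eq_sum_smul_monomial hP
  refine ⟨φ, ι, hφ, s, fun j => e j, c, fun j => hS (e j).2, hindep.comp e he, ?_⟩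
  filter_upwards [hfι] with z hz
  simpa [smul_eval] using hz
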